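/- Let 1 ≤ N ≤ 4. Then the extremal solution u* of (P)_λ on the unit ball is regular, i.e. sup_B u* < 1. -/

import Mathlib

open MeasureTheory Metric Set Filter

/-- The Laplacian of `u : ℝ^N → ℝ`, as the sum of pure second partial derivatives. -/
noncomputable def lap {N : ℕ} (u : EuclideanSpace ℝ (Fin N) → ℝ) (x : EuclideanSpace ℝ (Fin N)) : ℝ :=
  ∑ i : Fin N, fderiv ℝ (fun y => fderiv ℝ u y (EuclideanSpace.single i 1)) x
    (EuclideanSpace.single i 1)

/-- The biharmonic operator `Δ²`. -/
noncomputable def biharm {N : ℕ} (u : EuclideanSpace ℝ (Fin N) → ℝ)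
    (x : EuclideanSpace ℝ (Fin N)) : ℝ :=
  lap (lap u) x

/-- A classical solution of `(P)_λ` on the unit ball `B ⊆ ℝ^N`:
`u ∈ C⁴(B̄)`, `0 < u < 1` in `B`, `Δ²u = λ (1-u)⁻²` in `B`, and `u = 0`, `∂_ν u = 0` on `∂B`. -/
structure IsClassicalSolution (N : ℕ) (lam : ℝ) (u : EuclideanSpace ℝ (Fin N) → ℝ) : Prop where
  contDiffOn : ContDiffOn ℝ 4 u (closedBall (0 : EuclideanSpace ℝ (Fin N)) 1)
  pos : ∀ x ∈ ball (0 : EuclideanSpace ℝ (Fin N)) 1, 0 < u x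
  lt_one : ∀ x ∈ ball (0 : EuclideanSpace ℝ (Fin N)) 1, u x < 1
  eqn : ∀ x ∈ ball (0 : EuclideanSpace ℝ (Fin N)) 1, biharm u x = lam / (1 - u x) ^ 2
  bdry : ∀ x : EuclideanSpace ℝ (Fin N), ‖x‖ = 1 → u x = 0
  bdry_deriv : ∀ x : EuclideanSpace ℝ (Fin N), ‖x‖ = 1 →
    fderivWithin ℝ u (closedBall (0 : EuclideanSpace ℝ (Fin N)) 1) x x = 0

/-- The set of voltages `λ > 0` for which `(P)_λ` admits a classical solution;
the pull-in voltage `λ*` is its supremum. -/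
def solSet (N : ℕ) : Set ℝ := {lam | 0 < lam ∧ ∃ u, IsClassicalSolution N lam u}

/-- `λ̄_N = (8/9)(N - 2/3)(N - 8/3)`. -/
noncomputable def lamBar (N : ℕ) : ℝ := (8 / 9) * ((N : ℝ) - 2 / 3) * ((N : ℝ) - 8 / 3)

theorem lap_congr {N : ℕ} {u v : EuclideanSpace ℝ (Fin N) → ℝ} {x : EuclideanSpace ℝ (Fin N)}
    (h : u =ᶠ[nhds x] v) : lap u x = lap v x := by
  unfold lap
  refine Finset.sum_congr rfl fun i _ => ?_
  have : (fun y => fderiv ℝ u y (EuclideanSpace.single i 1)) =ᶠ[nhds x]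
      (fun y => fderiv ℝ v y (EuclideanSpace.single i 1)) := by
    filter_upwards [h.fderiv (𝕜 := ℝ)] with y hy
    rw [hy]
  rw [this.fderiv_eq]

theorem lap_radial {N : ℕ} {g g1 : ℝ → ℝ} {g2 : ℝ} {x : EuclideanSpace ℝ (Fin N)}
    (hg : ∀ᶠ s in nhds (‖x‖ ^ 2), HasDerivAt g (g1 s) s)
    (hg1 : HasDerivAt g1 g2 (‖x‖ ^ 2)) :
    lap (fun y : EuclideanSpace ℝ (Fin N) => g (‖y‖ ^ 2)) x
      = 4 * ‖x‖ ^ 2 * g2 + 2 * N * g1 (‖x‖ ^ 2) := by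
  have hn : ∀ y : EuclideanSpace ℝ (Fin N),
      HasFDerivAt (fun y : EuclideanSpace ℝ (Fin N) => ‖y‖ ^ 2) (2 • innerSL ℝ y) y :=
    fun y => (hasStrictFDerivAt_norm_sq y).hasFDerivAt
  have hc : Tendsto (fun y : EuclideanSpace ℝ (Fin N) => ‖y‖ ^ 2) (nhds x) (nhds (‖x‖ ^ 2)) :=
    (hn x).continuousAt
  have hi : ∀ i : Fin N, fderiv ℝ (fun y => fderiv ℝ
      (fun y : EuclideanSpace ℝ (Fin N) => g (‖y‖ ^ 2)) y (EuclideanSpace.single i 1)) x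
      (EuclideanSpace.single i 1) = 4 * (x i) ^ 2 * g2 + 2 * g1 (‖x‖ ^ 2) := by
    intro i
    have h1 : (fun y => fderiv ℝ
      (fun y : EuclideanSpace ℝ (Fin N) => g (‖y‖ ^ 2)) y (EuclideanSpace.single i 1))
      =ᶠ[nhds x] fun y => g1 (‖y‖ ^ 2) * (2 * y i) := by
      filter_upwards [hc.eventually hg] with y hy
      have := (hy.comp_hasFDerivAt y (hn y)).fderiv
      simp only [Function.comp_def] at this
      rw [this]
      simp [EuclideanSpace.inner_single_right]
    rw [h1.fderiv_eq]
    have h2 : HasFDerivAt (fun y : EuclideanSpace ℝ (Fin N) => 2 * y i)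
        ((2:ℝ) • (EuclideanSpace.proj i : EuclideanSpace ℝ (Fin N) →L[ℝ] ℝ)) x := by
      have := (EuclideanSpace.proj i : EuclideanSpace ℝ (Fin N) →L[ℝ] ℝ).hasFDerivAt (x := x)
      exact this.const_mul 2
    have h3 := ((hg1.comp_hasFDerivAt x (hn x)).mul h2).fderiv
    simp only [Function.comp_def] at h3
    have h4 : (fun y : EuclideanSpace ℝ (Fin N) => g1 (‖y‖ ^ 2) * (2 * y i)) = 
      ((fun y : EuclideanSpace ℝ (Fin N) => g1 (‖y‖ ^ 2)) * fun y => 2 * y i) := rfl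
    rw [h4, h3]
    simp [EuclideanSpace.inner_single_right]
    ring
  unfold lap
  rw [Finset.sum_congr rfl fun i _ => hi i, Finset.sum_add_distrib, ← Finset.sum_mul,
    ← Finset.mul_sum, EuclideanSpace.norm_sq_eq]
  simp
  ring

theorem fderiv_fderiv_apply {E : Type*} [NormedAddCommGroup E] [NormedSpace ℝ E]
    {u : E → ℝ} {x v : E} (h : ContDiffAt ℝ 2 u x) :
    fderiv ℝ (fun y => fderiv ℝ u y v) x v = iteratedFDeriv ℝ 2 u x ![v, v] := by
  have hd : DifferentiableAt ℝ (fderiv ℝ u) x :=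
    (h.fderiv_right (m := 1) (by norm_num)).differentiableAt (by norm_num)
  rw [iteratedFDeriv_two_apply]
  rw [fderiv_clm_apply hd (differentiableAt_const v)]
  simp

theorem lap_comp_isometry {N : ℕ} {u : EuclideanSpace ℝ (Fin N) → ℝ}
    (R : EuclideanSpace ℝ (Fin N) ≃ₗᵢ[ℝ] EuclideanSpace ℝ (Fin N))
    {x : EuclideanSpace ℝ (Fin N)} (h : ContDiffAt ℝ 2 u (R x)) :
    lap (fun y => u (R y)) x = lap u (R x) := by
  have e1 : ∀ b : OrthonormalBasis (Fin N) ℝ (EuclideanSpace ℝ (Fin N)),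
      ∑ i, fderiv ℝ (fun y => fderiv ℝ u y (b i)) (R x) (b i) = Laplacian.laplacian u (R x) := by
    intro b
    rw [InnerProductSpace.laplacian_eq_iteratedFDeriv_orthonormalBasis u b]
    exact Finset.sum_congr rfl fun i _ => fderiv_fderiv_apply h
  have h1 := e1 (EuclideanSpace.basisFun (Fin N) ℝ)
  have h2 := e1 ((EuclideanSpace.basisFun (Fin N) ℝ).map R)
  simp only [EuclideanSpace.basisFun_apply, OrthonormalBasis.map_apply] at h1 h2
  unfold lap
  rw [h1, ← h2]
  refine Finset.sum_congr rfl fun i _ => ?_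
  have h3 : ∀ (w : EuclideanSpace ℝ (Fin N) → ℝ) y, fderiv ℝ (fun y => w (R y)) y =
      (fderiv ℝ w (R y)).comp (R.toContinuousLinearEquiv : _ →L[ℝ] EuclideanSpace ℝ (Fin N)) := by
    intro w y
    exact R.toContinuousLinearEquiv.comp_right_fderiv (f := w) (x := y)
  simp only [h3 u]
  have h4 := h3 (fun z => fderiv ℝ u z (R (EuclideanSpace.single i 1))) x
  simp only [ContinuousLinearMap.comp_apply]
  erw [h4]
  rfl

theorem contDiffOn_lap {N : ℕ} {n : ℕ} {u : EuclideanSpace ℝ (Fin N) → ℝ}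
    {s : Set (EuclideanSpace ℝ (Fin N))} (hs : IsOpen s)
    (h : ContDiffOn ℝ (n + 2 : ℕ) u s) : ContDiffOn ℝ n (lap u) s := by
  unfold lap
  refine ContDiffOn.sum fun i _ => ?_
  have h1 : ContDiffOn ℝ (n + 1 : ℕ) (fderiv ℝ u) s :=
    h.fderiv_of_isOpen hs (by norm_cast)
  have h2 : ContDiffOn ℝ (n + 1 : ℕ) (fun y => fderiv ℝ u y (EuclideanSpace.single i 1)) s :=
    h1.clm_apply contDiffOn_const
  have h3 := h2.fderiv_of_isOpen (m := n) hs (by norm_cast)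
  exact h3.clm_apply contDiffOn_const

theorem integrable_mul_of_tsupport {N : ℕ} {φ w : EuclideanSpace ℝ (Fin N) → ℝ}
    {s : Set (EuclideanSpace ℝ (Fin N))} (hs : IsOpen s) (hφ : Continuous φ)
    (hc : HasCompactSupport φ) (hsub : tsupport φ ⊆ s) (hw : ContinuousOn w s) :
    Integrable (fun x => φ x * w x) := by
  refine Continuous.integrable_of_hasCompactSupport ?_ (hc.mul_right)
  refine continuous_iff_continuousAt.2 fun x => ?_
  by_cases hx : x ∈ tsupport φ
  · exact hφ.continuousAt.mul (hw.continuousAt (hs.mem_nhds (hsub hx)))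
  · have : (fun x => φ x * w x) =ᶠ[nhds x] fun _ => 0 := by
      filter_upwards [(isClosed_tsupport φ).isOpen_compl.mem_nhds hx] with y hy
      rw [image_eq_zero_of_notMem_tsupport hy, zero_mul]
    exact continuousAt_const.congr this.symm

theorem ibp_dir {N : ℕ} {φ w : EuclideanSpace ℝ (Fin N) → ℝ}
    {s : Set (EuclideanSpace ℝ (Fin N))} (hs : IsOpen s) (hφ : ContDiff ℝ 1 φ)
    (hc : HasCompactSupport φ) (hsub : tsupport φ ⊆ s) (hw : ContDiffOn ℝ 1 w s)
    (v : EuclideanSpace ℝ (Fin N)) :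
    ∫ x, φ x * fderiv ℝ w x v = - ∫ x, fderiv ℝ φ x v * w x := by
  have hφ' : Continuous (fun x => fderiv ℝ φ x v) :=
    (hφ.continuous_fderiv (by norm_num)).clm_apply continuous_const
  apply integral_mul_fderiv_eq_neg_fderiv_mul_of_integrable
  · exact integrable_mul_of_tsupport hs hφ' (hc.fderiv_apply ℝ v)
      ((tsupport_fderiv_apply_subset ℝ v).trans hsub) hw.continuousOn
  · exact integrable_mul_of_tsupport hs hφ.continuous hc hsub
      ((hw.continuousOn_fderiv_of_isOpen hs (by norm_num)).clm_apply continuousOn_const)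
  · exact integrable_mul_of_tsupport hs hφ.continuous hc hsub hw.continuousOn
  · intro x _
    exact hφ.differentiable (by norm_num) x
  · intro x hx
    exact (hw.differentiableOn (by norm_num)).differentiableAt (hs.mem_nhds (hsub hx))

theorem contDiff_dir {N : ℕ} {n : ℕ} {φ : EuclideanSpace ℝ (Fin N) → ℝ}
    (h : ContDiff ℝ (n + 1 : ℕ) φ) (v : EuclideanSpace ℝ (Fin N)) :
    ContDiff ℝ n (fun x => fderiv ℝ φ x v) :=
  (h.fderiv_right (m := n) (by norm_cast)).clm_apply contDiff_const

theorem lap_ibp {N : ℕ} {φ w : EuclideanSpace ℝ (Fin N) → ℝ}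
    {s : Set (EuclideanSpace ℝ (Fin N))} (hs : IsOpen s) (hφ : ContDiff ℝ 2 φ)
    (hc : HasCompactSupport φ) (hsub : tsupport φ ⊆ s) (hw : ContDiffOn ℝ 2 w s) :
    ∫ x, φ x * lap w x = ∫ x, lap φ x * w x := by
  unfold lap
  simp only [Finset.mul_sum, Finset.sum_mul]
  have hw1 : ∀ v, ContDiffOn ℝ 1 (fun x => fderiv ℝ w x v) s := fun v =>
    (hw.fderiv_of_isOpen hs (by norm_num)).clm_apply contDiffOn_const
  have hφ1 : ∀ v, ContDiff ℝ 1 (fun x => fderiv ℝ φ x v) := fun v => contDiff_dir (n := 1) hφ v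
  rw [integral_finsetSum, integral_finsetSum]
  · refine Finset.sum_congr rfl fun i _ => ?_
    rw [ibp_dir hs (hφ.of_le (by norm_num)) hc hsub (hw1 _),
      ibp_dir hs (hφ1 _) (hc.fderiv_apply ℝ _)
      ((tsupport_fderiv_apply_subset ℝ _).trans hsub) (hw.of_le (by norm_num)), neg_neg]
  · intro i _
    exact integrable_mul_of_tsupport hs (contDiff_dir (n := 0) (hφ1 _) _).continuous
      ((hc.fderiv_apply ℝ _).fderiv_apply ℝ _)
      (((tsupport_fderiv_apply_subset ℝ _).trans (tsupport_fderiv_apply_subset ℝ _)).trans hsub)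
      hw.continuousOn
  · intro i _
    exact integrable_mul_of_tsupport hs hφ.continuous hc hsub
      (((hw1 _).continuousOn_fderiv_of_isOpen hs (by norm_num)).clm_apply continuousOn_const)

theorem tsupport_lap {N : ℕ} {φ : EuclideanSpace ℝ (Fin N) → ℝ} :
    tsupport (lap φ) ⊆ tsupport φ := by
  refine closure_minimal ?_ (isClosed_tsupport φ)
  intro x hx
  by_contra hn
  apply hx
  have : φ =ᶠ[nhds x] fun _ => 0 := by
    filter_upwards [(isClosed_tsupport φ).isOpen_compl.mem_nhds hn] with y hy
    exact image_eq_zero_of_notMem_tsupport hy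
  rw [lap_congr this]
  simp [lap]

theorem bddAbove_solSet (N : ℕ) : BddAbove (solSet N) := by
  let φ : ContDiffBump (0 : EuclideanSpace ℝ (Fin N)) := ⟨1/4, 1/2, by norm_num, by norm_num⟩
  have hφs : ContDiff ℝ 4 φ := φ.contDiff
  have hc : HasCompactSupport φ := φ.hasCompactSupport
  have hsub : tsupport φ ⊆ ball (0 : EuclideanSpace ℝ (Fin N)) 1 := by
    rw [φ.tsupport_eq]
    exact closedBall_subset_ball (by norm_num)
  have hl : ContDiff ℝ 2 (lap φ) := by
    rw [← contDiffOn_univ]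
    exact contDiffOn_lap (n := 2) isOpen_univ (contDiffOn_univ.2 hφs)
  have hlc : HasCompactSupport (lap φ) := hc.mono' (subset_closure.trans tsupport_lap)
  have hl2 : Continuous (lap (lap φ)) := by
    rw [← continuousOn_univ]
    exact (contDiffOn_lap (n := 0) isOpen_univ (contDiffOn_univ.2 hl)).continuousOn
  have hl2c : HasCompactSupport (lap (lap φ)) := hlc.mono' (subset_closure.trans tsupport_lap)
  have hpos : 0 < ∫ x, φ x := φ.integral_pos
  refine ⟨(∫ x, |lap (lap φ) x|) / ∫ x, φ x, ?_⟩
  rintro lam ⟨hlam, u, hu⟩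
  rw [le_div_iff₀ hpos]
  have hu4 : ContDiffOn ℝ 4 u (ball 0 1) := hu.contDiffOn.mono ball_subset_closedBall
  have hu2 : ContDiffOn ℝ 2 (lap u) (ball 0 1) := contDiffOn_lap (n := 2) isOpen_ball hu4
  have hu0 : ContinuousOn (lap (lap u)) (ball 0 1) :=
    (contDiffOn_lap (n := 0) isOpen_ball hu2).continuousOn
  have e1 : ∫ x, φ x * lap (lap u) x = ∫ x, lap (lap φ) x * u x := by
    rw [lap_ibp isOpen_ball (hφs.of_le (by norm_num)) hc hsub hu2,
      lap_ibp isOpen_ball hl hlc (tsupport_lap.trans hsub) (hu4.of_le (by norm_num))]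
  have e2 : ∫ x, lam * φ x ≤ ∫ x, φ x * lap (lap u) x := by
    apply integral_mono (φ.continuous.integrable_of_hasCompactSupport hc |>.const_mul lam)
      (integrable_mul_of_tsupport isOpen_ball φ.continuous hc hsub hu0)
    intro x
    by_cases hx : x ∈ ball (0 : EuclideanSpace ℝ (Fin N)) 1
    · have h1 := hu.eqn x hx
      have h2 := hu.pos x hx
      have h3 := hu.lt_one x hx
      have h4 : lam ≤ lap (lap u) x := by
        change lap (lap u) x = _ at h1
        rw [h1, le_div_iff₀ (by nlinarith)]
        have : (1 - u x) ^ 2 ≤ 1 := by nlinarith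
        nlinarith
      have := φ.nonneg' x
      simp only
      rw [mul_comm]
      exact mul_le_mul_of_nonneg_left h4 this
    · have : φ x = 0 := image_eq_zero_of_notMem_tsupport fun h => hx (hsub h)
      simp [this]
  have e3 : ∫ x, lap (lap φ) x * u x ≤ ∫ x, |lap (lap φ) x| := by
    have hI := integrable_mul_of_tsupport isOpen_ball hl2 hl2c
      ((tsupport_lap.trans tsupport_lap).trans hsub) hu4.continuousOn
    apply integral_mono hI (hl2.integrable_of_hasCompactSupport hl2c).abs
    intro x
    by_cases hx : x ∈ ball (0 : EuclideanSpace ℝ (Fin N)) 1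
    · have h2 := hu.pos x hx
      have h3 := hu.lt_one x hx
      calc lap (lap φ) x * u x ≤ |lap (lap φ) x * u x| := le_abs_self _
        _ = |lap (lap φ) x| * u x := by rw [abs_mul, abs_of_pos h2]
        _ ≤ |lap (lap φ) x| * 1 := mul_le_mul_of_nonneg_left h3.le (abs_nonneg _)
        _ = _ := mul_one _
    · have : lap (lap φ) x = 0 := image_eq_zero_of_notMem_tsupport fun h =>
        hx (hsub (tsupport_lap (tsupport_lap h)))
      simp [this]
  rw [integral_const_mul] at e2
  linarith

noncomputable def Mn (n : ℕ) (φ : ℝ → ℝ) (t : ℝ) : ℝ := ∫ σ in (0:ℝ)..1, σ ^ n * φ (t * σ ^ 2)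

theorem Mn_continuous (n : ℕ) {φ : ℝ → ℝ} (h : Continuous φ) : Continuous (Mn n φ) := by
  unfold Mn
  apply intervalIntegral.continuous_parametric_intervalIntegral_of_continuous'
  fun_prop

theorem Mn_hasDerivAt (n : ℕ) {φ φ' : ℝ → ℝ} (h : ∀ t, HasDerivAt φ (φ' t) t)
    (h' : Continuous φ') (t : ℝ) : HasDerivAt (Mn n φ) (Mn (n + 2) φ' t) t := by
  have hφ : Continuous φ := continuous_iff_continuousAt.2 fun t => (h t).continuousAt
  obtain ⟨C, hC⟩ := (isCompact_Icc (a := -(|t| + 1)) (b := |t| + 1)).exists_bound_of_continuousOn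
    h'.continuousOn
  have hC' : ∀ s : ℝ, |s| ≤ |t| + 1 → |φ' s| ≤ C := fun s hs => hC s (abs_le.1 hs)
  have key := intervalIntegral.hasDerivAt_integral_of_dominated_loc_of_deriv_le
    (F := fun t σ : ℝ => σ ^ n * φ (t * σ ^ 2)) (F' := fun t σ => σ ^ (n + 2) * φ' (t * σ ^ 2))
    (a := 0) (b := 1) (μ := volume) (bound := fun _ => C) (x₀ := t) (ball_mem_nhds t one_pos)
    (Eventually.of_forall fun x => (by fun_prop : Continuous _).aestronglyMeasurable)
    ((by fun_prop : Continuous _).intervalIntegrable _ _)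
    ((by fun_prop : Continuous _).aestronglyMeasurable)
    (Eventually.of_forall ?_) (by simp) (Eventually.of_forall ?_)
  · exact key.2
  · intro σ hσ x hx
    rw [uIoc_of_le zero_le_one] at hσ
    have h1 : |x| ≤ |t| + 1 := by
      have := mem_ball.1 hx
      rw [Real.dist_eq] at this
      have h3 := abs_add_le (x - t) t
      rw [sub_add_cancel] at h3
      linarith
    have hs0 : 0 ≤ σ ^ 2 := sq_nonneg σ
    have hs1 : σ ^ 2 ≤ 1 := pow_le_one₀ hσ.1.le hσ.2
    have h2 : |x * σ ^ 2| ≤ |t| + 1 := by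
      rw [abs_mul, abs_of_nonneg hs0]
      nlinarith [abs_nonneg x]
    have h3 := hC' _ h2
    rw [Real.norm_eq_abs, abs_mul, abs_of_nonneg (pow_nonneg hσ.1.le _)]
    have h4 : σ ^ (n + 2) ≤ 1 := pow_le_one₀ hσ.1.le hσ.2
    have h5 : 0 ≤ σ ^ (n + 2) := pow_nonneg hσ.1.le _
    nlinarith [abs_nonneg (φ' (x * σ ^ 2))]
  · intro σ hσ x hx
    have h1 : HasDerivAt (fun x : ℝ => x * σ ^ 2) (1 * σ ^ 2) x := (hasDerivAt_id x).mul_const _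
    have h2 := ((h (x * σ ^ 2)).comp x h1).const_mul (σ ^ n)
    exact h2.congr_deriv (by ring)

theorem Mn_contDiff (k : ℕ) : ∀ (n : ℕ) {φ : ℝ → ℝ}, ContDiff ℝ k φ → ContDiff ℝ k (Mn n φ) := by
  induction k with
  | zero =>
    intro n φ h
    exact contDiff_zero.2 (Mn_continuous n h.continuous)
  | succ k ih =>
    intro n φ h
    have h' : ContDiff ℝ (k + 1) φ := by exact_mod_cast h
    rw [contDiff_succ_iff_deriv] at h'
    have hd : ∀ t, HasDerivAt φ (deriv φ t) t := fun t => (h'.1 t).hasDerivAt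
    have hM := Mn_hasDerivAt n hd h'.2.2.continuous
    have : ContDiff ℝ (k + 1) (Mn n φ) := by
      rw [contDiff_succ_iff_deriv]
      refine ⟨fun t => (hM t).differentiableAt, by simp, ?_⟩
      rw [show deriv (Mn n φ) = Mn (n + 2) (deriv φ) from funext fun t => (hM t).deriv]
      exact ih _ h'.2.2
    exact_mod_cast this

theorem Mn_identity (n : ℕ) {φ φ' : ℝ → ℝ} (h : ∀ t, HasDerivAt φ (φ' t) t)
    (h' : Continuous φ') (t : ℝ) : 2 * t * Mn (n + 2) φ' t + (n + 1) * Mn n φ t = φ t := by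
  have hφ : Continuous φ := continuous_iff_continuousAt.2 fun t => (h t).continuousAt
  unfold Mn
  rw [← intervalIntegral.integral_const_mul, ← intervalIntegral.integral_const_mul,
    ← intervalIntegral.integral_add]
  · have := intervalIntegral.integral_eq_sub_of_hasDerivAt (a := 0) (b := 1)
      (f := fun σ : ℝ => σ ^ (n + 1) * φ (t * σ ^ 2))
      (f' := fun σ => 2 * t * (σ ^ (n + 2) * φ' (t * σ ^ 2)) + (n + 1) * (σ ^ n * φ (t * σ ^ 2)))
      ?_ ((by fun_prop : Continuous _).intervalIntegrable _ _)
    · rw [this]; simp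
    · intro σ _
      have h1 : HasDerivAt (fun σ : ℝ => t * σ ^ 2) (t * (2 * σ)) σ := by
        simpa using (hasDerivAt_pow 2 σ).const_mul t
      have h2 : HasDerivAt (fun σ : ℝ => σ ^ (n + 1)) ((n + 1 : ℝ) * σ ^ n) σ := by
        simpa using hasDerivAt_pow (n + 1) σ
      have h3 := h2.mul ((h (t * σ ^ 2)).comp σ h1)
      exact h3.congr_deriv (by simp only [Function.comp]; ring)
  · exact (by fun_prop : Continuous _).intervalIntegrable _ _
  · exact (by fun_prop : Continuous _).intervalIntegrable _ _

theorem Mn_bound (n : ℕ) {φ : ℝ → ℝ} {C R t : ℝ} (h : ∀ s, |s| ≤ R → |φ s| ≤ C) (ht : |t| ≤ R) :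
    |Mn n φ t| ≤ C := by
  have := intervalIntegral.norm_integral_le_of_norm_le_const (a := 0) (b := 1)
    (f := fun σ : ℝ => σ ^ n * φ (t * σ ^ 2)) (C := C) ?_
  · simpa [Mn] using this
  · intro σ hσ
    rw [uIoc_of_le zero_le_one] at hσ
    have hs0 : 0 ≤ σ ^ 2 := sq_nonneg σ
    have hs1 : σ ^ 2 ≤ 1 := pow_le_one₀ hσ.1.le hσ.2
    have h2 : |t * σ ^ 2| ≤ R := by
      rw [abs_mul, abs_of_nonneg hs0]
      nlinarith [abs_nonneg t]
    have h3 := h _ h2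
    rw [Real.norm_eq_abs, abs_mul, abs_of_nonneg (pow_nonneg hσ.1.le _)]
    have h4 : σ ^ n ≤ 1 := pow_le_one₀ hσ.1.le hσ.2
    have h5 : 0 ≤ σ ^ n := pow_nonneg hσ.1.le _
    nlinarith [abs_nonneg (φ (t * σ ^ 2))]

theorem Mn_sub (n : ℕ) {φ ψ : ℝ → ℝ} (h : Continuous φ) (h' : Continuous ψ) (t : ℝ) :
    Mn n (fun s => φ s - ψ s) t = Mn n φ t - Mn n ψ t := by
  unfold Mn
  rw [← intervalIntegral.integral_sub]
  · congr 1; ext σ; ring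
  · exact (by fun_prop : Continuous _).intervalIntegrable _ _
  · exact (by fun_prop : Continuous _).intervalIntegrable _ _

theorem Mn_pos (n : ℕ) {φ : ℝ → ℝ} (h : Continuous φ) (hp : ∀ s ∈ Icc (0:ℝ) 1, 0 < φ s) {t : ℝ}
    (ht : t ∈ Icc (0:ℝ) 1) : 0 < Mn n φ t := by
  apply intervalIntegral.intervalIntegral_pos_of_pos_on
    ((by fun_prop : Continuous _).intervalIntegrable _ _) _ one_pos
  intro σ hσ
  have hs0 : 0 ≤ σ ^ 2 := sq_nonneg σ
  have hs1 : σ ^ 2 ≤ 1 := pow_le_one₀ hσ.1.le hσ.2.le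
  exact mul_pos (pow_pos hσ.1 _) (hp _ ⟨mul_nonneg ht.1 hs0, by nlinarith [ht.1, ht.2]⟩)

/-- Inner potential. -/
noncomputable def HH (n : ℕ) (φ : ℝ → ℝ) (t : ℝ) : ℝ := ∫ s in (0:ℝ)..t, 1 / 2 * Mn n φ s

noncomputable def AA (n : ℕ) (φ : ℝ → ℝ) (t : ℝ) : ℝ := 1 / 2 * Mn n (HH n φ) t

noncomputable def SS (n : ℕ) (φ : ℝ → ℝ) (t : ℝ) : ℝ := ∫ s in (1:ℝ)..t, (AA n φ s - AA n φ 1)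

theorem HH_hasDerivAt (n : ℕ) {φ : ℝ → ℝ} (h : Continuous φ) (t : ℝ) :
    HasDerivAt (HH n φ) (1 / 2 * Mn n φ t) t := by
  have hc := Mn_continuous n h
  have hc' : Continuous fun s => 1 / 2 * Mn n φ s := by fun_prop
  exact intervalIntegral.integral_hasDerivAt_right (hc'.intervalIntegrable _ _)
    (hc'.stronglyMeasurableAtFilter _ _) hc'.continuousAt

theorem HH_continuous (n : ℕ) {φ : ℝ → ℝ} (h : Continuous φ) : Continuous (HH n φ) :=
  continuous_iff_continuousAt.2 fun t => (HH_hasDerivAt n h t).continuousAt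

theorem AA_hasDerivAt (n : ℕ) {φ : ℝ → ℝ} (h : Continuous φ) (t : ℝ) :
    HasDerivAt (AA n φ) (1 / 2 * Mn (n + 2) (fun s => 1 / 2 * Mn n φ s) t) t := by
  have hc := Mn_continuous n h
  exact (Mn_hasDerivAt n (HH_hasDerivAt n h) (by fun_prop) t).const_mul _

theorem AA_continuous (n : ℕ) {φ : ℝ → ℝ} (h : Continuous φ) : Continuous (AA n φ) :=
  continuous_iff_continuousAt.2 fun t => (AA_hasDerivAt n h t).continuousAt

theorem SS_hasDerivAt (n : ℕ) {φ : ℝ → ℝ} (h : Continuous φ) (t : ℝ) :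
    HasDerivAt (SS n φ) (AA n φ t - AA n φ 1) t := by
  have hc := AA_continuous n h
  have hc' : Continuous fun s => AA n φ s - AA n φ 1 := by fun_prop
  exact intervalIntegral.integral_hasDerivAt_right (hc'.intervalIntegrable _ _)
    (hc'.stronglyMeasurableAtFilter _ _) hc'.continuousAt

theorem SS_continuous (n : ℕ) {φ : ℝ → ℝ} (h : Continuous φ) : Continuous (SS n φ) :=
  continuous_iff_continuousAt.2 fun t => (SS_hasDerivAt n h t).continuousAt

theorem contDiff_succ_of_hasDerivAt {k : ℕ} {f f' : ℝ → ℝ} (h : ∀ t, HasDerivAt f (f' t) t)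
    (h' : ContDiff ℝ k f') : ContDiff ℝ (k + 1 : ℕ) f := by
  have : ContDiff ℝ (k + 1) f := by
    rw [contDiff_succ_iff_deriv]
    refine ⟨fun t => (h t).differentiableAt, by simp, ?_⟩
    rwa [show deriv f = f' from funext fun t => (h t).deriv]
  exact_mod_cast this

theorem HH_contDiff (n k : ℕ) {φ : ℝ → ℝ} (h : ContDiff ℝ k φ) : ContDiff ℝ (k + 1 : ℕ) (HH n φ) :=
  contDiff_succ_of_hasDerivAt (HH_hasDerivAt n h.continuous)
    (contDiff_const.mul (Mn_contDiff k n h))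

theorem SS_contDiff (n k : ℕ) {φ : ℝ → ℝ} (h : ContDiff ℝ k φ) : ContDiff ℝ (k + 2 : ℕ) (SS n φ) :=
  contDiff_succ_of_hasDerivAt (SS_hasDerivAt n h.continuous)
    ((contDiff_const.mul (Mn_contDiff (k + 1) n (HH_contDiff n k h))).sub contDiff_const)

theorem SS_bound (n : ℕ) {φ : ℝ → ℝ} (h : Continuous φ) {C : ℝ} (hC : ∀ s, |φ s| ≤ C) {t : ℝ}
    (ht : |t| ≤ 3) : |SS n φ t| ≤ 6 * C := by
  have hC0 : 0 ≤ C := (abs_nonneg _).trans (hC 0)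
  have h1 : ∀ s, |Mn n φ s| ≤ C := fun s => Mn_bound n (R := |s|) (fun s _ => hC s) le_rfl
  have h2 : ∀ s, |s| ≤ 3 → |HH n φ s| ≤ 3 / 2 * C := by
    intro s hs
    have := intervalIntegral.norm_integral_le_of_norm_le_const (a := 0) (b := s)
      (f := fun s => 1 / 2 * Mn n φ s) (C := C / 2) (fun x _ => by
        rw [Real.norm_eq_abs, abs_mul, abs_of_pos (by norm_num : (0:ℝ) < 1 / 2)]
        linarith [h1 x])
    rw [sub_zero, Real.norm_eq_abs] at this
    unfold HH
    nlinarith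
  have h3 : ∀ s, |s| ≤ 3 → |AA n φ s| ≤ 3 / 4 * C := by
    intro s hs
    have := Mn_bound n h2 hs
    unfold AA
    rw [abs_mul, abs_of_pos (by norm_num : (0:ℝ) < 1 / 2)]
    linarith
  have h4 := intervalIntegral.norm_integral_le_of_norm_le_const (a := 1) (b := t)
      (f := fun s => AA n φ s - AA n φ 1) (C := 3 / 2 * C) (fun x hx => by
        have hx3 : |x| ≤ 3 := by
          rw [abs_le] at ht ⊢
          rw [mem_uIoc] at hx
          rcases hx with hx | hx
          · exact ⟨by linarith, by linarith⟩
          · exact ⟨by linarith, by linarith⟩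
        have := abs_sub (AA n φ x) (AA n φ 1)
        have e1 := h3 x hx3
        have e2 := h3 1 (by norm_num)
        rw [Real.norm_eq_abs]
        linarith)
  rw [Real.norm_eq_abs] at h4
  have h5 : |t - 1| ≤ 4 := by
    have := abs_sub t 1
    simp at this
    linarith
  unfold SS
  nlinarith

theorem SS_sub (n : ℕ) {φ ψ : ℝ → ℝ} (h : Continuous φ) (h' : Continuous ψ) (t : ℝ) :
    SS n (fun s => φ s - ψ s) t = SS n φ t - SS n ψ t := by
  have i1 := Mn_continuous n h
  have i2 := Mn_continuous n h'
  have i3 := HH_continuous n h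
  have i4 := HH_continuous n h'
  have i5 := AA_continuous n h
  have i6 := AA_continuous n h'
  have e1 : HH n (fun s => φ s - ψ s) = fun t => HH n φ t - HH n ψ t := by
    ext t
    unfold HH
    rw [← intervalIntegral.integral_sub ((by fun_prop : Continuous _).intervalIntegrable _ _)
      ((by fun_prop : Continuous _).intervalIntegrable _ _)]
    congr 1; ext s; rw [Mn_sub n h h']; ring
  have e2 : ∀ t, AA n (fun s => φ s - ψ s) t = AA n φ t - AA n ψ t := by
    intro t
    unfold AA
    rw [e1, Mn_sub n i3 i4]; ring
  unfold SS
  rw [← intervalIntegral.integral_sub ((by fun_prop : Continuous _).intervalIntegrable _ _)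
      ((by fun_prop : Continuous _).intervalIntegrable _ _)]
  congr 1; ext s; rw [e2, e2]; ring

theorem exists_nonlin : ∃ F : ℝ → ℝ, ContDiff ℝ 4 F ∧ (∀ s, 0 < F s ∧ F s ≤ 16) ∧
    (∃ L, LipschitzWith L F) ∧ ∀ s ∈ Icc (0:ℝ) (1 / 2), F s = 1 / (1 - s) ^ 2 := by
  let b : ContDiffBump (0 : ℝ) := ⟨1/2, 3/4, by norm_num, by norm_num⟩
  have hb : ∀ s : ℝ, 1 / 4 ≤ 1 - s * b s := by
    intro s
    by_cases hs : |s| < 3 / 4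
    · have h1 := b.nonneg' s
      have h2 := b.le_one (x := s)
      nlinarith [abs_lt.1 hs]
    · have : b s = 0 := b.zero_of_le_dist (by
        rw [dist_zero_right, Real.norm_eq_abs]; exact not_lt.1 hs)
      rw [this]; norm_num
  have hbs : ContDiff ℝ 4 b := b.contDiff
  have hF : ContDiff ℝ 4 (fun s => ((1 - s * b s) ^ 2)⁻¹) := by
    apply ContDiff.inv
    · fun_prop
    · intro s
      have := hb s
      positivity
  refine ⟨fun s => ((1 - s * b s) ^ 2)⁻¹, hF, ?_, ?_, ?_⟩
  · intro s
    have := hb s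
    constructor
    · positivity
    · rw [inv_le_comm₀ (by positivity) (by norm_num)]
      nlinarith
  · have hG : ContDiff ℝ 4 (fun s => ((1 - s * b s) ^ 2)⁻¹ - 1) := hF.sub contDiff_const
    have hGc : HasCompactSupport (fun s => ((1 - s * b s) ^ 2)⁻¹ - 1) := by
      refine b.hasCompactSupport.mono ?_
      intro s hs hbs
      apply hs
      simp only [hbs]
      simp
    obtain ⟨L, hL⟩ := hG.lipschitzWith_of_hasCompactSupport hGc (by norm_num)
    refine ⟨L, ?_⟩
    intro x y
    have := hL x y
    simpa [edist_dist, Real.dist_eq] using this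
  · intro s hs
    have : b s = 1 := b.one_of_mem_closedBall (by
      rw [mem_closedBall, dist_zero_right, Real.norm_eq_abs, abs_of_nonneg hs.1]; exact hs.2)
    simp [this]

theorem exists_fixed (n : ℕ) : ∃ lam : ℝ, 0 < lam ∧ ∃ φ : ℝ → ℝ, ContDiff ℝ 2 φ ∧
    (∀ t ∈ Icc (0:ℝ) 1, 0 < φ t) ∧ (∀ t ∈ Icc (0:ℝ) 1, lam * SS n φ t ≤ 1 / 2) ∧
    ∀ t ∈ Icc (0:ℝ) 1, 0 ≤ SS n φ t → φ t = 1 / (1 - lam * SS n φ t) ^ 2 := by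
  obtain ⟨F, hF, hFb, ⟨L, hL⟩, hFe⟩ := exists_nonlin
  let χ : ContDiffBump (0 : ℝ) := ⟨2, 3, by norm_num, by norm_num⟩
  have hχ : ContDiff ℝ 4 χ := χ.contDiff
  set lam : ℝ := 1 / (192 + 12 * L) with hlam
  have hL0 : (0:ℝ) ≤ L := L.2
  have hlam0 : 0 < lam := by positivity
  have hl1 : lam * (6 * 16) ≤ 1 / 2 := by
    rw [hlam, div_mul_eq_mul_div, div_le_div_iff₀ (by positivity) (by norm_num)]; linarith
  have hl2 : L * (lam * 6) ≤ 1 / 2 := by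
    rw [hlam, div_mul_eq_mul_div, ← mul_div_assoc, div_le_div_iff₀ (by positivity) (by norm_num)]
    linarith
  have hcont : ∀ φ : ℝ → ℝ, Continuous φ → Continuous fun t => χ t * F (lam * SS n φ t) := by
    intro φ hφ
    have := SS_continuous n hφ
    have := hF.continuous
    have := hχ.continuous
    fun_prop
  have hbound : ∀ (φ : ℝ → ℝ) t, |χ t * F (lam * SS n φ t)| ≤ 16 := by
    intro φ t
    have h1 := χ.nonneg' t
    have h2 := χ.le_one (x := t)
    have h3 := hFb (lam * SS n φ t)
    rw [abs_of_nonneg (mul_nonneg h1 h3.1.le)]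
    nlinarith
  let T : BoundedContinuousFunction ℝ ℝ → BoundedContinuousFunction ℝ ℝ := fun φ =>
    BoundedContinuousFunction.ofNormedAddCommGroup (fun t => χ t * F (lam * SS n φ t))
      (hcont φ φ.continuous) 16 (hbound φ)
  have hT : ContractingWith (1 / 2) T := by
    refine ⟨by norm_num, LipschitzWith.of_dist_le_mul fun φ ψ => ?_⟩
    rw [BoundedContinuousFunction.dist_le (by positivity)]
    intro t
    change dist (χ t * F (lam * SS n φ t)) (χ t * F (lam * SS n ψ t)) ≤ _
    rw [Real.dist_eq, ← mul_sub, abs_mul, abs_of_nonneg (χ.nonneg' t)]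
    by_cases ht : |t| < 3
    · have h1 : |F (lam * SS n φ t) - F (lam * SS n ψ t)| ≤ L * |lam * SS n φ t - lam * SS n ψ t| := by
        have := hL.dist_le_mul (lam * SS n φ t) (lam * SS n ψ t)
        simpa [Real.dist_eq] using this
      have h2 : |SS n φ t - SS n ψ t| ≤ 6 * dist φ ψ := by
        rw [← SS_sub n φ.continuous ψ.continuous]
        refine SS_bound n (by fun_prop) (fun s => ?_) ht.le
        rw [← Real.dist_eq]
        exact BoundedContinuousFunction.dist_coe_le_dist s
      rw [← mul_sub, abs_mul, abs_of_pos hlam0] at h1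
      have h3 := χ.nonneg' t
      have h4 := χ.le_one (x := t)
      have hd : 0 ≤ dist φ ψ := dist_nonneg
      have h5 : |F (lam * SS n φ t) - F (lam * SS n ψ t)| ≤ 1 / 2 * dist φ ψ := by
        calc _ ≤ L * (lam * |SS n φ t - SS n ψ t|) := h1
          _ ≤ L * (lam * (6 * dist φ ψ)) := by gcongr
          _ = (L * (lam * 6)) * dist φ ψ := by ring
          _ ≤ 1 / 2 * dist φ ψ := by gcongr
      push_cast
      nlinarith [abs_nonneg (F (lam * SS n φ t) - F (lam * SS n ψ t))]
    · have : χ t = 0 := χ.zero_of_le_dist (by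
        rw [dist_zero_right, Real.norm_eq_abs]; exact not_lt.1 ht)
      rw [this, zero_mul]
      positivity
  let φ : BoundedContinuousFunction ℝ ℝ := ContractingWith.fixedPoint T hT
  have hfix : T φ = φ := hT.fixedPoint_isFixedPt
  have hφ : ∀ t, φ t = χ t * F (lam * SS n φ t) := by
    intro t
    conv_lhs => rw [← hfix]
    rfl
  have hreg : ∀ k : ℕ, k ≤ 4 → ContDiff ℝ k (SS n φ) → ContDiff ℝ k φ := by
    intro k hk h
    have hk' : (k : WithTop ℕ∞) ≤ 4 := by exact_mod_cast hk
    have : (φ : ℝ → ℝ) = fun t => χ t * F (lam * SS n φ t) := funext hφ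
    rw [this]
    exact (hχ.of_le hk').mul ((hF.of_le hk').comp (contDiff_const.mul h))
  have hreg2 : ContDiff ℝ 2 φ :=
    hreg 2 (by norm_num) (SS_contDiff n 0 (contDiff_zero.2 φ.continuous))
  have h1 : ∀ t ∈ Icc (0:ℝ) 1, φ t = F (lam * SS n φ t) := by
    intro t ht
    have : χ t = 1 := χ.one_of_mem_closedBall (by
      rw [mem_closedBall, dist_zero_right, Real.norm_eq_abs, abs_of_nonneg ht.1]
      exact ht.2.trans (by norm_num))
    rw [hφ t, this, one_mul]
  have h2 : ∀ t ∈ Icc (0:ℝ) 1, lam * SS n φ t ≤ 1 / 2 := by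
    intro t ht
    have := SS_bound n φ.continuous (C := 16) (fun s => by rw [hφ s]; exact hbound φ s) (t := t)
      (by rw [abs_of_nonneg ht.1]; exact ht.2.trans (by norm_num))
    have := (abs_le.1 this).2
    nlinarith
  refine ⟨lam, hlam0, φ, hreg2, ?_, h2, ?_⟩
  · intro t ht
    rw [h1 t ht]
    exact (hFb _).1
  · intro t ht hS
    rw [h1 t ht]
    exact hFe _ ⟨mul_nonneg hlam0.le hS, h2 t ht⟩

theorem solSet_nonempty (N : ℕ) (hN : 1 ≤ N) : (solSet N).Nonempty := by
  obtain ⟨n, rfl⟩ : ∃ n, N = n + 1 := ⟨N - 1, by omega⟩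
  obtain ⟨lam, hlam, φ, hφ, hpos, hhalf, heq⟩ := exists_fixed n
  have hφc := hφ.continuous
  -- monotonicity
  have hA : StrictMonoOn (AA n φ) (Icc 0 1) := by
    apply strictMonoOn_of_deriv_pos (convex_Icc 0 1) (AA_continuous n hφc).continuousOn
    intro t ht
    rw [interior_Icc] at ht
    rw [(AA_hasDerivAt n hφc t).deriv]
    have hc := Mn_continuous n hφc
    have := Mn_pos (n + 2) (φ := fun s => 1 / 2 * Mn n φ s) (by fun_prop) (fun s hs => by
      have := Mn_pos n hφc hpos hs
      positivity) (Ioo_subset_Icc_self ht)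
    positivity
  have hS : StrictAntiOn (SS n φ) (Icc 0 1) := by
    apply strictAntiOn_of_deriv_neg (convex_Icc 0 1) (SS_continuous n hφc).continuousOn
    intro t ht
    rw [interior_Icc] at ht
    rw [(SS_hasDerivAt n hφc t).deriv]
    have := hA (Ioo_subset_Icc_self ht) (right_mem_Icc.2 zero_le_one) ht.2
    linarith
  have hS1 : SS n φ 1 = 0 := by simp [SS]
  have hSp : ∀ t ∈ Ico (0:ℝ) 1, 0 < SS n φ t := by
    intro t ht
    have := hS (Ico_subset_Icc_self ht) (right_mem_Icc.2 zero_le_one) ht.2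
    linarith
  have hnb : ∀ x ∈ ball (0 : EuclideanSpace ℝ (Fin (n + 1))) 1, ‖x‖ ^ 2 ∈ Ico (0:ℝ) 1 := by
    intro x hx
    rw [mem_ball_zero_iff] at hx
    exact ⟨by positivity, by nlinarith [norm_nonneg x]⟩
  have hu : ContDiff ℝ 4 (fun x : EuclideanSpace ℝ (Fin (n + 1)) => lam * SS n φ (‖x‖ ^ 2)) := by
    have h4 : ContDiff ℝ 4 (SS n φ) := SS_contDiff n 2 hφ
    exact contDiff_const.mul (h4.comp (contDiff_norm_sq ℝ))
  refine ⟨lam, hlam, fun x => lam * SS n φ (‖x‖ ^ 2), hu.contDiffOn, ?_, ?_, ?_, ?_, ?_⟩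
  · intro x hx
    exact mul_pos hlam (hSp _ (hnb x hx))
  · intro x hx
    have := hhalf _ (Ico_subset_Icc_self (hnb x hx))
    linarith
  · intro x hx
    have hHc := HH_continuous n hφc
    have hMc := Mn_continuous n hφc
    have hMd : ∀ t, HasDerivAt (fun s => 1 / 2 * Mn n φ s) (1 / 2 * Mn (n + 2) (deriv φ) t) t := by
      intro t
      exact (Mn_hasDerivAt n (fun t => (hφ.differentiable (by norm_num) t).hasDerivAt)
        (hφ.continuous_deriv (by norm_num)) t).const_mul _
    have l1 : lap (fun x : EuclideanSpace ℝ (Fin (n + 1)) => lam * SS n φ (‖x‖ ^ 2)) =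
        fun x => lam * (HH n φ (‖x‖ ^ 2) - 2 * (n + 1) * AA n φ 1) := by
      ext y
      rw [lap_radial (g := fun t => lam * SS n φ t) (g1 := fun t => lam * (AA n φ t - AA n φ 1))
        (g2 := lam * (1 / 2 * Mn (n + 2) (fun s => 1 / 2 * Mn n φ s) (‖y‖ ^ 2)))
        (Eventually.of_forall fun s => (SS_hasDerivAt n hφc s).const_mul lam)
        (((AA_hasDerivAt n hφc _).sub_const _).const_mul lam)]
      have := Mn_identity n (HH_hasDerivAt n hφc) (by fun_prop) (‖y‖ ^ 2)
      rw [← this]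
      unfold AA
      push_cast
      ring
    unfold biharm
    rw [l1, lap_radial (g := fun t => lam * (HH n φ t - 2 * (n + 1) * AA n φ 1))
      (g1 := fun t => lam * (1 / 2 * Mn n φ t))
      (g2 := lam * (1 / 2 * Mn (n + 2) (deriv φ) (‖x‖ ^ 2)))
      (Eventually.of_forall fun s => ((HH_hasDerivAt n hφc s).sub_const _).const_mul lam)
      ((hMd _).const_mul lam)]
    have h1 := Mn_identity n (fun t => (hφ.differentiable (by norm_num) t).hasDerivAt)
        (hφ.continuous_deriv (by norm_num)) (‖x‖ ^ 2)
    have h2 := heq _ (Ico_subset_Icc_self (hnb x hx)) (hSp _ (hnb x hx)).le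
    rw [← mul_one_div lam, ← h2, ← h1]
    push_cast
    ring
  · intro x hx
    simp [hx, hS1]
  · intro x hx
    have hxm : x ∈ closedBall (0 : EuclideanSpace ℝ (Fin (n + 1))) 1 := by simp [hx]
    rw [fderivWithin_eq_fderiv ((uniqueDiffOn_convex (convex_closedBall _ _) (by
        rw [interior_closedBall _ one_ne_zero]; exact ⟨0, mem_ball_self one_pos⟩)) x hxm)
      (hu.differentiable (by norm_num) x)]
    have h0 := (SS_hasDerivAt n hφc (‖x‖ ^ 2)).const_mul lam
    have := (h0.comp_hasFDerivAt x (hasStrictFDerivAt_norm_sq x).hasFDerivAt).fderiv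
    simp only [Function.comp_def] at this
    rw [this]
    simp [hx]

theorem le_of_hasDerivAt_nonneg {f f' : ℝ → ℝ} {a b : ℝ} (hab : a ≤ b)
    (hc : ContinuousOn f (Icc a b)) (hd : ∀ x ∈ Ioo a b, HasDerivAt f (f' x) x)
    (hn : ∀ x ∈ Ioo a b, 0 ≤ f' x) : f a ≤ f b := by
  rcases hab.eq_or_lt with rfl | hlt
  · exact le_rfl
  obtain ⟨c, hc1, hc2⟩ := exists_hasDerivAt_eq_slope f f' hlt hc hd
  have := hn c hc1
  rw [hc2, le_div_iff₀ (by linarith)] at this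
  linarith

theorem lt_of_hasDerivAt_pos {f f' : ℝ → ℝ} {a b : ℝ} (hlt : a < b)
    (hc : ContinuousOn f (Icc a b)) (hd : ∀ x ∈ Ioo a b, HasDerivAt f (f' x) x)
    (hn : ∀ x ∈ Ioo a b, 0 < f' x) : f a < f b := by
  obtain ⟨c, hc1, hc2⟩ := exists_hasDerivAt_eq_slope f f' hlt hc hd
  have := hn c hc1
  rw [hc2, lt_div_iff₀ (by linarith)] at this
  linarith

/-- Radial profile data for the clamped problem `Δ² p = f` on the unit ball of `ℝ^(m+1)`. -/
structure Rad (m : ℕ) (f p q h k : ℝ → ℝ) : Prop where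
  fc : ContinuousOn f (Icc 0 1)
  pc : ContinuousOn p (Icc 0 1)
  p1 : p 1 = 0
  qc : ContinuousOn q (Icc 0 1)
  q0 : q 0 = 0
  q1 : q 1 = 0
  hc : ContinuousOn h (Ico 0 1)
  kc : ContinuousOn k (Ico 0 1)
  k0 : k 0 = 0
  dp : ∀ r ∈ Ioo (0:ℝ) 1, HasDerivAt p (q r) r
  dq : ∀ r ∈ Ioo (0:ℝ) 1, HasDerivAt (fun s => s ^ m * q s) (r ^ m * h r) r
  dh : ∀ r ∈ Ioo (0:ℝ) 1, HasDerivAt h (k r) r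
  dk : ∀ r ∈ Ioo (0:ℝ) 1, HasDerivAt (fun s => s ^ m * k s) (r ^ m * f r) r

namespace Rad

variable {m : ℕ} {f p q h k f₁ p₁ q₁ h₁ k₁ f₂ p₂ q₂ h₂ k₂ : ℝ → ℝ}

theorem sub (R₂ : Rad m f₂ p₂ q₂ h₂ k₂) (R₁ : Rad m f₁ p₁ q₁ h₁ k₁) :
    Rad m (fun r => f₂ r - f₁ r) (fun r => p₂ r - p₁ r) (fun r => q₂ r - q₁ r)
      (fun r => h₂ r - h₁ r) (fun r => k₂ r - k₁ r) where
  fc := R₂.fc.sub R₁.fc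
  pc := R₂.pc.sub R₁.pc
  p1 := by simp [R₁.p1, R₂.p1]
  qc := R₂.qc.sub R₁.qc
  q0 := by simp [R₁.q0, R₂.q0]
  q1 := by simp [R₁.q1, R₂.q1]
  hc := R₂.hc.sub R₁.hc
  kc := R₂.kc.sub R₁.kc
  k0 := by simp [R₁.k0, R₂.k0]
  dp := fun r hr => (R₂.dp r hr).sub (R₁.dp r hr)
  dq := fun r hr => by
    have := (R₂.dq r hr).sub (R₁.dq r hr)
    simp only [mul_sub]
    exact this
  dh := fun r hr => (R₂.dh r hr).sub (R₁.dh r hr)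
  dk := fun r hr => by
    have := (R₂.dk r hr).sub (R₁.dk r hr)
    simp only [mul_sub]
    exact this

theorem Ac (R : Rad m f p q h k) : ContinuousOn (fun s => s ^ m * q s) (Icc 0 1) :=
  (continuous_pow m).continuousOn.mul R.qc

theorem Bc (R : Rad m f p q h k) : ContinuousOn (fun s => s ^ m * k s) (Ico 0 1) :=
  (continuous_pow m).continuousOn.mul R.kc

theorem k_pos (R : Rad m f p q h k) (hf : ∀ r ∈ Ioo (0:ℝ) 1, 0 < f r) :
    ∀ r ∈ Ioo (0:ℝ) 1, 0 < k r := by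
  intro r hr
  have := lt_of_hasDerivAt_pos (f := fun s => s ^ m * k s) hr.1
    (R.Bc.mono (Icc_subset_Ico_right hr.2))
    (fun x hx => R.dk x ⟨hx.1, hx.2.trans hr.2⟩)
    (fun x hx => mul_pos (pow_pos hx.1 m) (hf x ⟨hx.1, hx.2.trans hr.2⟩))
  simp only [R.k0, mul_zero] at this
  exact pos_of_mul_pos_right this (pow_pos hr.1 m).le

theorem h_strictMono (R : Rad m f p q h k) (hf : ∀ r ∈ Ioo (0:ℝ) 1, 0 < f r) {a b : ℝ}
    (ha : 0 < a) (hab : a < b) (hb : b < 1) : h a < h b :=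
  lt_of_hasDerivAt_pos hab
    (R.hc.mono fun x hx => ⟨ha.le.trans hx.1, hx.2.trans_lt hb⟩)
    (fun x hx => R.dh x ⟨ha.trans hx.1, hx.2.trans hb⟩)
    (fun x hx => R.k_pos hf x ⟨ha.trans hx.1, hx.2.trans hb⟩)

theorem q_neg (R : Rad m f p q h k) (hf : ∀ r ∈ Ioo (0:ℝ) 1, 0 < f r) :
    ∀ r ∈ Ioo (0:ℝ) 1, q r < 0 := by
  intro c hc
  by_contra hq
  have hA : 0 ≤ c ^ m * q c := mul_nonneg (pow_pos hc.1 m).le (not_lt.1 hq)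
  obtain ⟨x, hx, hxe⟩ := exists_hasDerivAt_eq_slope (fun s => s ^ m * q s) (fun r => r ^ m * h r)
    hc.1 (R.Ac.mono (Icc_subset_Icc_right hc.2.le)) (fun x hx => R.dq x ⟨hx.1, hx.2.trans hc.2⟩)
  have hx1 : 0 ≤ x ^ m * h x := by
    rw [hxe]
    simp only [R.q0, mul_zero, sub_zero]
    exact div_nonneg hA hc.1.le
  have hx2 : 0 ≤ h x := nonneg_of_mul_nonneg_right hx1 (pow_pos hx.1 m)
  have := lt_of_hasDerivAt_pos (f := fun s => s ^ m * q s) hc.2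
    (R.Ac.mono (Icc_subset_Icc_left hc.1.le))
    (fun y hy => R.dq y ⟨hc.1.trans hy.1, hy.2⟩)
    (fun y hy => mul_pos (pow_pos (hc.1.trans hy.1) m)
      (hx2.trans_lt (R.h_strictMono hf hx.1 (hx.2.trans hy.1) hy.2)))
  simp only [R.q1, mul_zero] at this
  linarith

theorem strictAnti (R : Rad m f p q h k) (hf : ∀ r ∈ Ioo (0:ℝ) 1, 0 < f r) :
    StrictAntiOn p (Icc 0 1) := by
  apply strictAntiOn_of_deriv_neg (convex_Icc 0 1) R.pc
  intro t ht
  rw [interior_Icc] at ht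
  rw [(R.dp t ht).deriv]
  exact R.q_neg hf t ht

theorem B_bound (R : Rad m f p q h k) : ∃ C, ∀ r ∈ Ico (0:ℝ) 1, |r ^ m * k r| ≤ C := by
  obtain ⟨C, hC⟩ := (isCompact_Icc (a := (0:ℝ)) (b := 1)).exists_bound_of_continuousOn
    ((continuous_pow m).continuousOn.mul R.fc)
  refine ⟨C, fun r hr => ?_⟩
  rcases hr.1.eq_or_lt with rfl | h0
  · simp only [R.k0, mul_zero, abs_zero]
    exact (norm_nonneg _).trans (hC 0 (by simp))
  obtain ⟨x, hx, hxe⟩ := exists_hasDerivAt_eq_slope (fun s => s ^ m * k s) (fun r => r ^ m * f r)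
    h0 (R.Bc.mono (Icc_subset_Ico_right hr.2)) (fun x hx => R.dk x ⟨hx.1, hx.2.trans hr.2⟩)
  simp only [R.k0, mul_zero, sub_zero] at hxe
  rw [eq_div_iff h0.ne'] at hxe
  rw [← hxe, abs_mul, abs_of_pos h0]
  have h1 : |x ^ m * f x| ≤ C := hC x ⟨hx.1.le, (hx.2.trans hr.2).le⟩
  nlinarith [hr.2, abs_nonneg (x ^ m * f x)]

theorem h_bound (R : Rad m f p q h k) : ∃ C, ∀ r ∈ Ico (1/2:ℝ) 1, |h r| ≤ C := by
  obtain ⟨C, hC⟩ := R.B_bound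
  have hC0 : 0 ≤ C := (abs_nonneg _).trans (hC 0 (by simp))
  refine ⟨|h (1/2)| + 2 ^ m * C, fun r hr => ?_⟩
  have hp : 0 ≤ 2 ^ m * C := by positivity
  rcases hr.1.eq_or_lt with rfl | h0
  · linarith
  obtain ⟨x, hx, hxe⟩ := exists_hasDerivAt_eq_slope h k
    h0 (R.hc.mono fun y hy => ⟨by linarith [hy.1], hy.2.trans_lt hr.2⟩)
    (fun x hx => R.dh x ⟨by linarith [hx.1], hx.2.trans hr.2⟩)
  have hx0 : 0 < x := by linarith [hx.1]
  have hk : |k x| ≤ 2 ^ m * C := by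
    have h1 := hC x ⟨hx0.le, hx.2.trans hr.2⟩
    rw [abs_mul, abs_of_pos (pow_pos hx0 m)] at h1
    have h2 : 1 ≤ (2 * x) ^ m := one_le_pow₀ (by linarith [hx.1])
    rw [mul_pow] at h2
    have h3 : (0:ℝ) < 2 ^ m := by positivity
    calc |k x| ≤ (2 ^ m * x ^ m) * |k x| := le_mul_of_one_le_left (abs_nonneg _) h2
      _ = 2 ^ m * (x ^ m * |k x|) := by ring
      _ ≤ 2 ^ m * C := by gcongr
  rw [eq_div_iff (by linarith)] at hxe
  have : h r = h (1/2) + k x * (r - 1/2) := by linarith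
  rw [this]
  refine (abs_add_le _ _).trans ?_
  rw [abs_mul, abs_of_pos (by linarith : 0 < r - 1/2)]
  have : |k x| * (r - 1 / 2) ≤ |k x| * 1 :=
    mul_le_mul_of_nonneg_left (by linarith [hr.2]) (abs_nonneg _)
  linarith

theorem symm (R₁ : Rad m f₁ p₁ q₁ h₁ k₁) (R₂ : Rad m f₂ p₂ q₂ h₂ k₂) :
    ∫ r in (0:ℝ)..1, r ^ m * (p₁ r * f₂ r - p₂ r * f₁ r) = 0 := by
  have hmem : Ico (1/2:ℝ) 1 ∈ nhdsWithin (1:ℝ) (Iio 1) := Ico_mem_nhdsLT (by norm_num)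
  have hmem0 : Ico (1/2:ℝ) 1 ⊆ Icc 0 1 := fun x hx => ⟨by linarith [hx.1], hx.2.le⟩
  have lim1 : ∀ {g : ℝ → ℝ}, ContinuousOn g (Icc 0 1) → g 1 = 0 →
      Tendsto g (nhdsWithin 1 (Iio 1)) (nhds 0) := by
    intro g hg hg1
    have h1 := (hg 1 (by simp)).tendsto
    rw [hg1] at h1
    exact h1.mono_left (nhdsWithin_le_of_mem (mem_of_superset hmem hmem0))
  have prod : ∀ {g b : ℝ → ℝ}, Tendsto g (nhdsWithin 1 (Iio 1)) (nhds 0) →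
      (∃ C, ∀ r ∈ Ico (1/2:ℝ) 1, |b r| ≤ C) →
      Tendsto (fun r => g r * b r) (nhdsWithin 1 (Iio 1)) (nhds 0) := by
    rintro g b hg ⟨C, hC⟩
    exact hg.zero_mul_isBoundedUnder_le ⟨C, by
      rw [eventually_map]
      filter_upwards [hmem] with r hr using hC r hr⟩
  have Bb : ∀ {f p q h k : ℝ → ℝ}, Rad m f p q h k →
      ∃ C, ∀ r ∈ Ico (1/2:ℝ) 1, |r ^ m * k r| ≤ C := by
    intro f p q h k R
    obtain ⟨C, hC⟩ := R.B_bound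
    exact ⟨C, fun r hr => hC r ⟨by linarith [hr.1], hr.2⟩⟩
  let W : ℝ → ℝ := fun r => p₁ r * (r ^ m * k₂ r) - p₂ r * (r ^ m * k₁ r)
    - (r ^ m * q₁ r) * h₂ r + (r ^ m * q₂ r) * h₁ r
  have hW1 : Tendsto W (nhdsWithin 1 (Iio 1)) (nhds 0) := by
    have := (((prod (lim1 R₁.pc R₁.p1) (Bb R₂)).sub (prod (lim1 R₂.pc R₂.p1) (Bb R₁))).sub
      (prod (lim1 R₁.Ac (by simp [R₁.q1])) R₂.h_bound)).add
      (prod (lim1 R₂.Ac (by simp [R₂.q1])) R₁.h_bound)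
    simpa using this
  have hWc : ContinuousOn W (Ico 0 1) := by
    have s : Ico (0:ℝ) 1 ⊆ Icc 0 1 := Ico_subset_Icc_self
    exact ((((R₁.pc.mono s).mul R₂.Bc).sub ((R₂.pc.mono s).mul R₁.Bc)).sub
      ((R₁.Ac.mono s).mul R₂.hc)).add ((R₂.Ac.mono s).mul R₁.hc)
  have hW0 : Tendsto W (nhdsWithin 0 (Ioi 0)) (nhds 0) := by
    have h1 := (hWc 0 (by simp)).tendsto
    have h2 : W 0 = 0 := by simp [W, R₁.q0, R₂.q0, R₁.k0, R₂.k0]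
    rw [h2] at h1
    exact h1.mono_left (nhdsWithin_le_of_mem (mem_of_superset (Ioo_mem_nhdsGT zero_lt_one)
      Ioo_subset_Ico_self))
  have hInteg : ContinuousOn (fun r => r ^ m * (p₁ r * f₂ r - p₂ r * f₁ r)) (Icc 0 1) :=
    (continuous_pow m).continuousOn.mul ((R₁.pc.mul R₂.fc).sub (R₂.pc.mul R₁.fc))
  rw [intervalIntegral.integral_eq_sub_of_hasDerivAt_of_tendsto zero_lt_one (f := W) ?_
    (hInteg.intervalIntegrable_of_Icc zero_le_one) hW0 hW1, sub_zero]
  intro r hr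
  have := ((((R₁.dp r hr).mul (R₂.dk r hr)).sub ((R₂.dp r hr).mul (R₁.dk r hr))).sub
    ((R₁.dq r hr).mul (R₂.dh r hr))).add ((R₂.dq r hr).mul (R₁.dh r hr))
  exact this.congr_deriv (by ring)

end Rad

theorem convex_ineq {a b l₁ l₂ : ℝ} (ha : 0 ≤ a) (hab : a ≤ b) (hb : b < 1) (hl : 0 < l₁)
    (hll : l₁ ≤ l₂) :
    l₁ * ((b - a) * ((3 * a - 1) / (1 - a) ^ 3)) ≤ a * (l₂ / (1 - b) ^ 2) - b * (l₁ / (1 - a) ^ 2) := by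
  have hX : 0 < 1 - a := by linarith
  have hY : 0 < 1 - b := by linarith
  have h1 : 1 / (1 - a) ^ 2 + 2 * (b - a) / (1 - a) ^ 3 ≤ 1 / (1 - b) ^ 2 := by
    rw [div_add_div _ _ (by positivity) (by positivity), div_le_div_iff₀ (by positivity) (by positivity)]
    have : 0 ≤ (1 - a) ^ 2 * ((b - a) ^ 2 * ((1 - a) + 2 * (1 - b))) := by
      apply mul_nonneg (by positivity)
      apply mul_nonneg (by positivity)
      linarith
    nlinarith
  have h2 : l₁ * (1 / (1 - b) ^ 2) ≤ l₂ / (1 - b) ^ 2 := by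
    rw [mul_one_div]; gcongr
  have h3 : l₁ * ((b - a) * ((3 * a - 1) / (1 - a) ^ 3)) =
      a * (l₁ * (1 / (1 - a) ^ 2 + 2 * (b - a) / (1 - a) ^ 3)) - b * (l₁ / (1 - a) ^ 2) := by
    field_simp
    ring
  rw [h3]
  have h4 : l₁ * (1 / (1 - a) ^ 2 + 2 * (b - a) / (1 - a) ^ 3) ≤ l₂ / (1 - b) ^ 2 :=
    (mul_le_mul_of_nonneg_left h1 hl.le).trans h2
  have := mul_le_mul_of_nonneg_left h4 ha
  linarith

theorem Rad.energy {m : ℕ} {p₁ q₁ h₁ k₁ p₂ q₂ h₂ k₂ : ℝ → ℝ} {l₁ l₂ : ℝ}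
    (R₁ : Rad m (fun r => l₁ / (1 - p₁ r) ^ 2) p₁ q₁ h₁ k₁)
    (R₂ : Rad m (fun r => l₂ / (1 - p₂ r) ^ 2) p₂ q₂ h₂ k₂)
    (hl : 0 < l₁) (hll : l₁ < l₂) (hp0 : ∀ r ∈ Icc (0:ℝ) 1, 0 ≤ p₁ r)
    (hp12 : ∀ r ∈ Icc (0:ℝ) 1, p₁ r ≤ p₂ r) (hp1 : ∀ r ∈ Icc (0:ℝ) 1, p₂ r < 1) :
    ∫ r in (0:ℝ)..1, r ^ m * (1 / (1 - p₁ r) ^ 3) ≤ 4 := by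
  have hp11 : ∀ r ∈ Icc (0:ℝ) 1, p₁ r < 1 := fun r hr => (hp12 r hr).trans_lt (hp1 r hr)
  have hX : ∀ r ∈ Icc (0:ℝ) 1, 1 - p₁ r ≠ 0 := fun r hr => by linarith [hp11 r hr]
  have hc1 : ContinuousOn (fun r => 1 - p₁ r) (Icc 0 1) := continuousOn_const.sub R₁.pc
  have hGc : ContinuousOn (fun r => r ^ m * ((3 * p₁ r - 1) / (1 - p₁ r) ^ 3)) (Icc 0 1) :=
    (continuous_pow m).continuousOn.mul (((continuousOn_const.mul R₁.pc).sub continuousOn_const).div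
      (hc1.pow 3) fun r hr => pow_ne_zero _ (hX r hr))
  have hGi := hGc.intervalIntegrable_of_Icc (μ := volume) zero_le_one
  have hanti1 := R₁.strictAnti (fun r hr => by
    have := hp11 r (Ioo_subset_Icc_self hr)
    have : 0 < 1 - p₁ r := by linarith
    positivity)
  have hanti := (R₂.sub R₁).strictAnti (fun r hr => by
    have h2 := hp1 r (Ioo_subset_Icc_self hr)
    have h12 := hp12 r (Ioo_subset_Icc_self hr)
    have h3 : 0 < 1 - p₂ r := by linarith
    have h4 : 0 < 1 - p₁ r := by linarith
    have : l₁ / (1 - p₁ r) ^ 2 < l₂ / (1 - p₂ r) ^ 2 := by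
      apply div_lt_div₀ hll _ (by linarith) (by positivity)
      gcongr
    linarith)
  have key : ∫ r in (0:ℝ)..1, r ^ m * ((3 * p₁ r - 1) / (1 - p₁ r) ^ 3) ≤ 0 := by
    by_cases h0 : p₁ 0 < 1 / 3
    · have : ∫ r in (0:ℝ)..1, r ^ m * ((3 * p₁ r - 1) / (1 - p₁ r) ^ 3) ≤ ∫ r in (0:ℝ)..1, (0:ℝ) := by
        apply intervalIntegral.integral_mono_on zero_le_one hGi (by simp)
        intro r hr
        have h1 := hanti1.antitoneOn (left_mem_Icc.2 zero_le_one) hr hr.1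
        have h2 : 0 < 1 - p₁ r := by linarith [hp11 r hr]
        apply mul_nonpos_of_nonneg_of_nonpos (pow_nonneg hr.1 m)
        apply div_nonpos_of_nonpos_of_nonneg (by linarith) (by positivity)
      simpa using this
    · obtain ⟨r₁, hr₁, hr₁e⟩ : (1 / 3 : ℝ) ∈ p₁ '' Icc 0 1 := by
        apply intermediate_value_Icc' zero_le_one R₁.pc
        rw [R₁.p1]
        exact ⟨by norm_num, not_lt.1 h0⟩
      have hr₁1 : r₁ < 1 := by
        rcases hr₁.2.eq_or_lt with h | h
        · rw [h, R₁.p1] at hr₁e; norm_num at hr₁e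
        · exact h
      have hw : 0 < p₂ r₁ - p₁ r₁ := by
        have := hanti hr₁ (right_mem_Icc.2 zero_le_one) hr₁1
        simp only [R₁.p1, R₂.p1, sub_zero] at this
        exact this
      have hs := R₁.symm R₂
      have hInteg : ContinuousOn (fun r => r ^ m * (p₁ r * (l₂ / (1 - p₂ r) ^ 2)
          - p₂ r * (l₁ / (1 - p₁ r) ^ 2))) (Icc 0 1) :=
        (continuous_pow m).continuousOn.mul ((R₁.pc.mul R₂.fc).sub (R₂.pc.mul R₁.fc))
      have hle : ∫ r in (0:ℝ)..1, (l₁ * (p₂ r₁ - p₁ r₁)) *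
          (r ^ m * ((3 * p₁ r - 1) / (1 - p₁ r) ^ 3)) ≤ 0 := by
        refine le_trans ?_ hs.le
        apply intervalIntegral.integral_mono_on zero_le_one (hGi.const_mul _)
          (hInteg.intervalIntegrable_of_Icc zero_le_one)
        intro r hr
        have h2 : 0 < 1 - p₁ r := by linarith [hp11 r hr]
        have c1 := convex_ineq (hp0 r hr) (hp12 r hr) (hp1 r hr) hl hll.le
        have c2 : (p₂ r₁ - p₁ r₁) * ((3 * p₁ r - 1) / (1 - p₁ r) ^ 3) ≤
            (p₂ r - p₁ r) * ((3 * p₁ r - 1) / (1 - p₁ r) ^ 3) := by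
          rcases le_total r r₁ with hrr | hrr
          · have d1 := hanti.antitoneOn hr hr₁ hrr
            have d2 := hanti1.antitoneOn hr hr₁ hrr
            apply mul_le_mul_of_nonneg_right d1
            apply div_nonneg (by linarith) (by positivity)
          · have d1 := hanti.antitoneOn hr₁ hr hrr
            have d2 := hanti1.antitoneOn hr₁ hr hrr
            apply mul_le_mul_of_nonpos_right d1
            apply div_nonpos_of_nonpos_of_nonneg (by linarith) (by positivity)
        have c3 := mul_le_mul_of_nonneg_left c2 hl.le
        have c4 := mul_le_mul_of_nonneg_left (c3.trans c1) (pow_nonneg hr.1 m)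
        calc _ = r ^ m * (l₁ * ((p₂ r₁ - p₁ r₁) * ((3 * p₁ r - 1) / (1 - p₁ r) ^ 3))) := by ring
          _ ≤ _ := c4
      rw [intervalIntegral.integral_const_mul] at hle
      by_contra hcon
      have := mul_pos (mul_pos hl hw) (not_le.1 hcon)
      linarith
  have hfin : ∫ r in (0:ℝ)..1, r ^ m * (1 / (1 - p₁ r) ^ 3) ≤
      ∫ r in (0:ℝ)..1, (r ^ m * ((3 * p₁ r - 1) / (1 - p₁ r) ^ 3) + 4) := by
    have hJc : ContinuousOn (fun r => r ^ m * (1 / (1 - p₁ r) ^ 3)) (Icc 0 1) :=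
      (continuous_pow m).continuousOn.mul (continuousOn_const.div
        (hc1.pow 3) fun r hr => pow_ne_zero _ (hX r hr))
    apply intervalIntegral.integral_mono_on zero_le_one
      (hJc.intervalIntegrable_of_Icc zero_le_one) (hGi.add (by simp))
    intro r hr
    have h2 : 0 < 1 - p₁ r := by linarith [hp11 r hr]
    have h3 : 1 / (1 - p₁ r) ^ 3 ≤ (3 * p₁ r - 1) / (1 - p₁ r) ^ 3 + 4 := by
      rw [div_add' _ _ _ (by positivity)]
      apply div_le_div_of_nonneg_right _ (by positivity)
      nlinarith [mul_nonneg (sq_nonneg (2 * (1 - p₁ r) - 1)) (by linarith : 0 ≤ 1 - p₁ r + 1)]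
    have h4 : r ^ m ≤ 1 := pow_le_one₀ hr.1 hr.2
    have h5 := pow_nonneg hr.1 m
    have h6 := mul_le_mul_of_nonneg_left h3 h5
    nlinarith
  rw [intervalIntegral.integral_add hGi (by simp)] at hfin
  simp at hfin key ⊢
  linarith

theorem Rad.quant {m : ℕ} (hm : m ≤ 3) {p q h k : ℝ → ℝ} {l L : ℝ}
    (R : Rad m (fun r => l / (1 - p r) ^ 2) p q h k) (hl : 0 < l) (hlL : l ≤ L)
    (hp0 : ∀ r ∈ Icc (0:ℝ) 1, 0 ≤ p r) (hp1 : ∀ r ∈ Icc (0:ℝ) 1, p r < 1)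
    (hJ : ∫ r in (0:ℝ)..1, r ^ m * (1 / (1 - p r) ^ 3) ≤ 4) :
    p 0 ≤ 1 - (17 * L) ^ 3 * Real.exp (-(64 * (17 * L) ^ 3)) := by
  have hX : ∀ r ∈ Icc (0:ℝ) 1, 0 < 1 - p r := fun r hr => by linarith [hp1 r hr]
  have hf : ∀ r ∈ Ioo (0:ℝ) 1, 0 < l / (1 - p r) ^ 2 := fun r hr => by
    have := hX r (Ioo_subset_Icc_self hr)
    positivity
  have hc1 : ContinuousOn (fun r => 1 - p r) (Icc 0 1) := continuousOn_const.sub R.pc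
  have hJc : ContinuousOn (fun r => r ^ m * (1 / (1 - p r) ^ 3)) (Icc 0 1) :=
      (continuous_pow m).continuousOn.mul (continuousOn_const.div
        (hc1.pow 3) fun r hr => pow_ne_zero _ (hX r hr).ne')
  -- bound on B
  have hB : ∀ r ∈ Ioo (0:ℝ) 1, ∀ e : ℝ, 0 < e → r ^ m * k r ≤ l * (e * 4 + r ^ (m + 1) / e ^ 2) := by
    intro r hr e he
    have hsub : Icc 0 r ⊆ Icc (0:ℝ) 1 := Icc_subset_Icc_right hr.2.le
    have hfc : ContinuousOn (fun r => r ^ m * (l / (1 - p r) ^ 2)) (Icc 0 1) :=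
      (continuous_pow m).continuousOn.mul R.fc
    have e1 : ∫ s in (0:ℝ)..r, s ^ m * (l / (1 - p s) ^ 2) = r ^ m * k r := by
      rw [intervalIntegral.integral_eq_sub_of_hasDerivAt_of_le hr.1.le
        (R.Bc.mono (Icc_subset_Ico_right hr.2)) (fun x hx => R.dk x ⟨hx.1, hx.2.trans hr.2⟩)
        ((hfc.mono hsub).intervalIntegrable_of_Icc hr.1.le)]
      simp [R.k0]
    have hJi := (hJc.mono hsub).intervalIntegrable_of_Icc (μ := volume) hr.1.le
    have hpi : IntervalIntegrable (fun s : ℝ => s ^ m) volume 0 r :=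
      (continuous_pow m).intervalIntegrable _ _
    have e2 : ∫ s in (0:ℝ)..r, s ^ m * (l / (1 - p s) ^ 2) ≤
        ∫ s in (0:ℝ)..r, (l * e * (s ^ m * (1 / (1 - p s) ^ 3)) + l / e ^ 2 * s ^ m) := by
      apply intervalIntegral.integral_mono_on hr.1.le
        ((hfc.mono hsub).intervalIntegrable_of_Icc hr.1.le)
        ((hJi.const_mul _).add (hpi.const_mul _))
      intro s hs
      have hx := hX s (hsub hs)
      have hsm := pow_nonneg hs.1 m
      have h1 : 1 / (1 - p s) ^ 2 ≤ e * (1 / (1 - p s) ^ 3) + 1 / e ^ 2 := by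
        rw [mul_one_div, div_add_div _ _ (by positivity) (by positivity),
          div_le_div_iff₀ (by positivity) (by positivity)]
        have hcub : (1 - p s) * e ^ 2 ≤ e ^ 3 + (1 - p s) ^ 3 := by
          rcases le_total (1 - p s) e with h | h
          · nlinarith [mul_le_mul_of_nonneg_right h (sq_nonneg e), pow_pos hx 3]
          · have : e ^ 2 ≤ (1 - p s) ^ 2 := by gcongr
            nlinarith [mul_le_mul_of_nonneg_left this hx.le, pow_pos he 3]
        have := mul_le_mul_of_nonneg_right hcub (sq_nonneg (1 - p s))
        nlinarith
      have h2 := mul_le_mul_of_nonneg_left h1 (mul_nonneg hl.le hsm)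
      calc s ^ m * (l / (1 - p s) ^ 2) = l * s ^ m * (1 / (1 - p s) ^ 2) := by ring
        _ ≤ _ := h2
        _ = _ := by ring
    rw [intervalIntegral.integral_add (hJi.const_mul _) (hpi.const_mul _),
      intervalIntegral.integral_const_mul, intervalIntegral.integral_const_mul, integral_pow] at e2
    have e3 : ∫ s in (0:ℝ)..r, s ^ m * (1 / (1 - p s) ^ 3) ≤ 4 := by
      refine le_trans ?_ hJ
      apply intervalIntegral.integral_mono_interval le_rfl hr.1.le hr.2.le _
        (hJc.intervalIntegrable_of_Icc zero_le_one)
      refine (ae_restrict_iff' measurableSet_Ioc).2 (Eventually.of_forall fun s hs => ?_)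
      have hx := hX s (Ioc_subset_Icc_self hs)
      have hsm := pow_nonneg hs.1.le m
      simp only [Pi.zero_apply]
      positivity
    have e4 : (r ^ (m + 1) - 0 ^ (m + 1)) / ((m:ℝ) + 1) ≤ r ^ (m + 1) := by
      rw [zero_pow (by omega), sub_zero]
      apply div_le_self (pow_nonneg hr.1.le _)
      have : (0:ℝ) ≤ m := Nat.cast_nonneg m
      linarith
    have e5 := mul_le_mul_of_nonneg_left e3 (mul_pos hl he).le
    have e6 := mul_le_mul_of_nonneg_left e4 (div_pos hl (pow_pos he 2)).le
    rw [← e1]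
    calc _ ≤ _ := e2
      _ ≤ l * e * 4 + l / e ^ 2 * r ^ (m + 1) := add_le_add e5 e6
      _ = _ := by ring
  have hk : ∀ r ∈ Ioo (0:ℝ) 1, k r ≤ 5 * l * r ^ (-(5/3) : ℝ) := by
    intro r hr
    set ρ : ℝ := r ^ (1/3 : ℝ) with hρ
    have hρ0 : 0 < ρ := Real.rpow_pos_of_pos hr.1 _
    have hρ1 : ρ ≤ 1 := Real.rpow_le_one hr.1.le hr.2.le (by norm_num)
    have hρ3 : ρ ^ 3 = r := by
      rw [hρ, ← Real.rpow_natCast, ← Real.rpow_mul hr.1.le]; norm_num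
    have hρ5 : r ^ (-(5/3) : ℝ) = (ρ ^ 5)⁻¹ := by
      rw [hρ, ← Real.rpow_natCast, ← Real.rpow_mul hr.1.le, ← Real.rpow_neg hr.1.le]; norm_num
    rw [hρ5, ← div_eq_mul_inv, le_div_iff₀ (by positivity)]
    have hk0 := R.k_pos hf r hr
    have h1 := hB r hr (ρ ^ (m + 1)) (by positivity)
    have h2 : r ^ (m + 1) / (ρ ^ (m + 1)) ^ 2 = ρ ^ (m + 1) := by
      rw [← hρ3]; field_simp; ring
    rw [h2, ← hρ3] at h1
    rw [hρ3] at h1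
    have h3 : ρ ^ m * (ρ ^ (2 * m) * k r) ≤ ρ ^ m * (5 * l * ρ) := by
      have : (ρ ^ 3) ^ m = ρ ^ m * ρ ^ (2 * m) := by
        rw [← pow_mul, ← pow_add]; congr 1; ring
      rw [← hρ3] at h1 
      rw [this] at h1
      rw [hρ3] at h1
      rw [pow_succ] at h1
      linarith
    have h4 := le_of_mul_le_mul_left h3 (pow_pos hρ0 m)
    have h5 : ρ ^ 6 ≤ ρ ^ (2 * m) := pow_le_pow_of_le_one hρ0.le hρ1 (by omega)
    have h6 : ρ * (k r * ρ ^ 5) ≤ ρ * (5 * l) := by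
      have := mul_le_mul_of_nonneg_right h5 hk0.le
      nlinarith
    exact le_of_mul_le_mul_left h6 hρ0
  -- bound on h
  obtain ⟨c, hc, hc0⟩ := exists_hasDerivAt_eq_zero (f := fun s => s ^ m * q s) zero_lt_one R.Ac
    (by simp [R.q0, R.q1]) R.dq
  have hhc : h c = 0 := by
    rcases mul_eq_zero.1 hc0 with h | h
    · exact absurd h (pow_pos hc.1 m).ne'
    · exact h
  have hrp : ∀ (a : ℝ) {x : ℝ}, 0 < x → HasDerivAt (fun s : ℝ => s ^ a) (a * x ^ (a - 1)) x :=
    fun a x hx => Real.hasDerivAt_rpow_const (Or.inl hx.ne')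
  have hh : ∀ r ∈ Ioo (0:ℝ) 1, -(15/2 * l) * r ^ (-(2/3) : ℝ) ≤ h r := by
    intro r hr
    have hrpos := Real.rpow_pos_of_pos hr.1 (-(2/3))
    rcases le_or_gt r c with hrc | hrc
    · have := le_of_hasDerivAt_nonneg (f := fun s => -(h s) - 15/2 * l * s ^ (-(2/3) : ℝ))
        (f' := fun s => -(k s) - 15/2 * l * (-(2/3) * s ^ (-(2/3) - 1 : ℝ))) hrc ?_ ?_ ?_
      · simp only [hhc] at this
        have h2 := Real.rpow_pos_of_pos hc.1 (-(2/3))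
        have h3 : 0 < 15/2 * l * c ^ (-(2/3) : ℝ) := by positivity
        linarith
      · apply ContinuousOn.sub
        · exact (R.hc.mono fun x hx => ⟨hr.1.le.trans hx.1, hx.2.trans_lt hc.2⟩).neg
        · intro x hx
          exact ((hrp (-(2/3)) (hr.1.trans_le hx.1)).continuousAt.continuousWithinAt).const_mul _
      · intro x hx
        exact (R.dh x ⟨hr.1.trans hx.1, hx.2.trans hc.2⟩).neg.sub
          ((hrp (-(2/3)) (hr.1.trans hx.1)).const_mul _)
      · intro x hx
        have h1 := hk x ⟨hr.1.trans hx.1, hx.2.trans hc.2⟩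
        rw [show (-(2/3) - 1 : ℝ) = -(5/3) by norm_num]
        linarith
    · have := R.h_strictMono hf hc.1 hrc hr.2
      rw [hhc] at this
      have h3 : 0 < 15/2 * l * r ^ (-(2/3) : ℝ) := by positivity
      linarith
  -- bound on q
  have hq : ∀ r ∈ Ioo (0:ℝ) 1, -(45/2 * l) * r ^ (1/3 : ℝ) ≤ q r := by
    intro r hr
    have := le_of_hasDerivAt_nonneg (f := fun s => s ^ m * q s + 45/2 * l * (s ^ m * s ^ (1/3 : ℝ)))
      (f' := fun s => s ^ m * h s + 45/2 * l * ((m * s ^ (m - 1)) * s ^ (1/3 : ℝ)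
        + s ^ m * (1/3 * s ^ (1/3 - 1 : ℝ)))) hr.1.le ?_ ?_ ?_
    · simp only [R.q0, mul_zero] at this
      rw [Real.zero_rpow (by norm_num)] at this
      have h1 : 0 ≤ r ^ m * (q r + 45/2 * l * r ^ (1/3 : ℝ)) := by linarith
      have := nonneg_of_mul_nonneg_right h1 (pow_pos hr.1 m)
      linarith
    · apply (R.Ac.mono (Icc_subset_Icc_right hr.2.le)).add
      have : Continuous fun s : ℝ => s ^ (1/3 : ℝ) :=
        Real.continuous_rpow_const (by norm_num)
      fun_prop
    · intro x hx
      exact (R.dq x ⟨hx.1, hx.2.trans hr.2⟩).add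
        (((hasDerivAt_pow m x).mul (hrp (1/3) hx.1)).const_mul _)
    · intro x hx
      have h1 := hh x ⟨hx.1, hx.2.trans hr.2⟩
      rw [show (1/3 - 1 : ℝ) = -(2/3) by norm_num]
      have hx0 := hx.1
      have h2 : 0 ≤ 45/2 * l * ((m * x ^ (m - 1)) * x ^ (1/3 : ℝ)) := by positivity
      have h3 := mul_le_mul_of_nonneg_left h1 (pow_pos hx0 m).le
      nlinarith
  -- bound on p
  have hp : ∀ r ∈ Ioo (0:ℝ) 1, 1 - p r ≤ (1 - p 0) + 17 * l * r ^ (4/3 : ℝ) := by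
    intro r hr
    have := le_of_hasDerivAt_nonneg (f := fun s => p s + 135/8 * l * s ^ (4/3 : ℝ))
      (f' := fun s => q s + 135/8 * l * (4/3 * s ^ (4/3 - 1 : ℝ))) hr.1.le ?_ ?_ ?_
    · rw [Real.zero_rpow (by norm_num)] at this
      have h1 : 0 < l * r ^ (4/3 : ℝ) := mul_pos hl (Real.rpow_pos_of_pos hr.1 _)
      linarith
    · apply (R.pc.mono (Icc_subset_Icc_right hr.2.le)).add
      have : Continuous fun s : ℝ => s ^ (4/3 : ℝ) :=
        Real.continuous_rpow_const (by norm_num)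
      fun_prop
    · intro x hx
      exact (R.dp x ⟨hx.1, hx.2.trans hr.2⟩).add ((hrp (4/3) hx.1).const_mul _)
    · intro x hx
      have h1 := hq x ⟨hx.1, hx.2.trans hr.2⟩
      rw [show (4/3 - 1 : ℝ) = 1/3 by norm_num]
      linarith
  -- conclusion
  set ε := 1 - p 0 with hε
  have hε0 : 0 < ε := hX 0 (by simp)
  have hε1 : ε ≤ 1 := by linarith [hp0 0 (by simp)]
  set C := 17 * L with hC
  have hC0 : 0 < C := by linarith
  have hpC : ∀ r ∈ Ioo (0:ℝ) 1, (1 - p r) ^ 3 ≤ 4 * (ε ^ 3 + C ^ 3 * r ^ 4) := by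
    intro r hr
    have hx := hX r (Ioo_subset_Icc_self hr)
    have hr43 := Real.rpow_pos_of_pos hr.1 (4/3)
    have h1 : 1 - p r ≤ ε + C * r ^ (4/3 : ℝ) := by
      have := hp r hr
      have h2 : 17 * l * r ^ (4/3 : ℝ) ≤ C * r ^ (4/3 : ℝ) := by
        apply mul_le_mul_of_nonneg_right _ hr43.le
        linarith
      linarith
    set y := C * r ^ (4/3 : ℝ) with hy
    have hy0 : 0 < y := by positivity
    have hy3 : y ^ 3 = C ^ 3 * r ^ 4 := by
      rw [hy, mul_pow, ← Real.rpow_natCast (r ^ (4/3 : ℝ)), ← Real.rpow_mul hr.1.le]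
      norm_num
    rw [← hy3]
    calc (1 - p r) ^ 3 ≤ (ε + y) ^ 3 := by gcongr
      _ ≤ 4 * (ε ^ 3 + y ^ 3) := by
        nlinarith [mul_nonneg (add_pos hε0 hy0).le (sq_nonneg (ε - y))]
  have hden : ∀ r : ℝ, 0 < ε ^ 3 + C ^ 3 * r ^ 4 := fun r => by positivity
  have hlogd : ∀ r : ℝ, HasDerivAt (fun r => 1 / (16 * C ^ 3) * Real.log (ε ^ 3 + C ^ 3 * r ^ 4))
      (r ^ 3 * (1 / (4 * (ε ^ 3 + C ^ 3 * r ^ 4)))) r := by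
    intro r
    have h1 : HasDerivAt (fun r : ℝ => ε ^ 3 + C ^ 3 * r ^ 4) (C ^ 3 * (4 * r ^ 3)) r := by
      simpa using ((hasDerivAt_pow 4 r).const_mul (C ^ 3)).const_add (ε ^ 3)
    refine ((h1.log (hden r).ne').const_mul _).congr_deriv ?_
    have := (hden r).ne'
    field_simp
    ring
  have hcontI : Continuous fun r : ℝ => r ^ 3 * (1 / (4 * (ε ^ 3 + C ^ 3 * r ^ 4))) := by
    apply (continuous_pow 3).mul
    apply continuous_const.div (by fun_prop)
    intro r
    have := hden r
    positivity
  have hI : ∫ r in (0:ℝ)..1, r ^ 3 * (1 / (4 * (ε ^ 3 + C ^ 3 * r ^ 4))) ≤ 4 := by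
    refine le_trans ?_ hJ
    apply intervalIntegral.integral_mono_on_of_le_Ioo zero_le_one
      (hcontI.intervalIntegrable _ _) (hJc.intervalIntegrable_of_Icc zero_le_one)
    intro r hr
    have hx := hX r (Ioo_subset_Icc_self hr)
    have h1 : r ^ 3 ≤ r ^ m := pow_le_pow_of_le_one hr.1.le hr.2.le hm
    have h2 : 1 / (4 * (ε ^ 3 + C ^ 3 * r ^ 4)) ≤ 1 / (1 - p r) ^ 3 :=
      one_div_le_one_div_of_le (by positivity) (hpC r hr)
    have := hden r
    exact mul_le_mul h1 h2 (by positivity) (pow_nonneg hr.1.le m)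
  rw [intervalIntegral.integral_eq_sub_of_hasDerivAt (fun r _ => hlogd r)
    (hcontI.intervalIntegrable _ _)] at hI
  have hlog : Real.log ((ε ^ 3 + C ^ 3) / ε ^ 3) ≤ 64 * C ^ 3 := by
    rw [Real.log_div (by positivity) (by positivity)]
    simp only [one_pow, mul_one, ne_eq, OfNat.ofNat_ne_zero, not_false_eq_true, zero_pow, mul_zero,
      add_zero] at hI
    rw [← mul_sub, div_mul_eq_mul_div, div_le_iff₀ (by positivity)] at hI
    linarith
  rw [Real.log_le_iff_le_exp (by positivity), div_le_iff₀ (by positivity)] at hlog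
  have hE := Real.exp_pos (64 * C ^ 3)
  have h1 : C ^ 3 ≤ Real.exp (64 * C ^ 3) * ε := by
    have : ε ^ 3 ≤ ε := by
      calc ε ^ 3 ≤ ε ^ 1 := pow_le_pow_of_le_one hε0.le hε1 (by norm_num)
        _ = ε := pow_one ε
    have h2 := mul_le_mul_of_nonneg_left this hE.le
    have h3 := pow_pos hε0 3
    linarith
  have h2 : C ^ 3 * Real.exp (-(64 * C ^ 3)) ≤ ε := by
    rw [Real.exp_neg, ← div_eq_mul_inv, div_le_iff₀ hE]
    linarith
  linarith

theorem radial_of_comp {N : ℕ} {u : EuclideanSpace ℝ (Fin N) → ℝ}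
    (h : ∀ R : EuclideanSpace ℝ (Fin N) ≃ₗᵢ[ℝ] EuclideanSpace ℝ (Fin N),
      ∀ x ∈ ball (0 : EuclideanSpace ℝ (Fin N)) 1, u x ≤ u (R x))
    {x y : EuclideanSpace ℝ (Fin N)} (hx : x ∈ ball (0 : EuclideanSpace ℝ (Fin N)) 1)
    (hxy : ‖x‖ = ‖y‖) : u x = u y := by
  have key : ∀ a b : EuclideanSpace ℝ (Fin N), a ∈ ball (0 : EuclideanSpace ℝ (Fin N)) 1 →
      ‖a‖ = ‖b‖ → u a ≤ u b := by
    intro a b ha hab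
    have := h ((Submodule.span ℝ {a - b})ᗮ.reflection) a ha
    rwa [Submodule.reflection_sub hab] at this
  refine le_antisymm (key x y hx hxy) (key y x ?_ hxy.symm)
  rw [mem_ball_zero_iff] at hx ⊢
  rwa [← hxy]

theorem isClassicalSolution_comp {N : ℕ} {lam : ℝ} {u : EuclideanSpace ℝ (Fin N) → ℝ}
    (hu : IsClassicalSolution N lam u)
    (R : EuclideanSpace ℝ (Fin N) ≃ₗᵢ[ℝ] EuclideanSpace ℝ (Fin N)) :
    IsClassicalSolution N lam (fun y => u (R y)) := by
  have hb : ∀ x ∈ ball (0 : EuclideanSpace ℝ (Fin N)) 1,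
      R x ∈ ball (0 : EuclideanSpace ℝ (Fin N)) 1 := by
    intro x hx
    rw [mem_ball_zero_iff] at hx ⊢
    rwa [R.norm_map]
  have hcb : MapsTo R (closedBall (0 : EuclideanSpace ℝ (Fin N)) 1) (closedBall 0 1) := by
    intro x hx
    rw [mem_closedBall_zero_iff] at hx ⊢
    rwa [R.norm_map]
  have hub : ContDiffOn ℝ 4 u (ball 0 1) := hu.contDiffOn.mono ball_subset_closedBall
  have hl : ContDiffOn ℝ (2 : ℕ) (lap u) (ball 0 1) :=
    contDiffOn_lap isOpen_ball (hub.of_le (by norm_num))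
  have l1 : ∀ x ∈ ball (0 : EuclideanSpace ℝ (Fin N)) 1,
      lap (fun y => u (R y)) x = lap u (R x) := fun x hx =>
    lap_comp_isometry R ((hub.contDiffAt (isOpen_ball.mem_nhds (hb x hx))).of_le (by norm_num))
  refine ⟨?_, fun x hx => hu.pos _ (hb x hx), fun x hx => hu.lt_one _ (hb x hx), ?_, ?_, ?_⟩
  · exact hu.contDiffOn.comp R.contDiff.contDiffOn hcb
  · intro x hx
    rw [← hu.eqn _ (hb x hx)]
    unfold biharm
    rw [lap_congr (v := fun y => lap u (R y))]
    · exact lap_comp_isometry R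
        (by exact_mod_cast hl.contDiffAt (isOpen_ball.mem_nhds (hb x hx)))
    · filter_upwards [isOpen_ball.mem_nhds hx] with y hy using l1 y hy
  · intro x hx
    exact hu.bdry _ (by rwa [R.norm_map])
  · intro x hx
    have hx' : R x ∈ closedBall (0 : EuclideanSpace ℝ (Fin N)) 1 := by
      rw [mem_closedBall_zero_iff, R.norm_map, hx]
    have hxc : x ∈ closedBall (0 : EuclideanSpace ℝ (Fin N)) 1 := by
      rw [mem_closedBall_zero_iff, hx]
    have hU : UniqueDiffOn ℝ (closedBall (0 : EuclideanSpace ℝ (Fin N)) 1) :=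
      uniqueDiffOn_convex (convex_closedBall _ _)
        (by rw [interior_closedBall _ one_ne_zero]; exact ⟨0, mem_ball_self one_pos⟩)
    have h1 : HasFDerivWithinAt u (fderivWithin ℝ u (closedBall 0 1) (R x)) (closedBall 0 1)
        (R x) := ((hu.contDiffOn.differentiableOn (by norm_num)) _ hx').hasFDerivWithinAt
    have h2 := h1.comp x (R.toContinuousLinearEquiv.hasFDerivAt.hasFDerivWithinAt) hcb
    have h3 := h2.fderivWithin (hU x hxc)
    have h4 : fderivWithin ℝ (fun y => u (R y)) (closedBall 0 1) x = _ := h3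
    rw [h4]
    exact hu.bdry_deriv (R x) (by rwa [R.norm_map])

theorem norm_single_smul {m : ℕ} (r : ℝ) :
    ‖r • (EuclideanSpace.single 0 1 : EuclideanSpace ℝ (Fin (m + 1)))‖ = |r| := by
  rw [norm_smul]; simp

theorem profile_hasDerivAt {m : ℕ} {v : EuclideanSpace ℝ (Fin (m + 1)) → ℝ}
    {e : EuclideanSpace ℝ (Fin (m + 1))} {r : ℝ} (h : DifferentiableAt ℝ v (r • e)) :
    HasDerivAt (fun s : ℝ => v (s • e)) (fderiv ℝ v (r • e) e) r := by
  have h1 : HasDerivAt (fun s : ℝ => s • e) e r := by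
    simpa using (hasDerivAt_id r).smul_const e
  exact h.hasFDerivAt.comp_hasDerivAt r h1

theorem profile_lap {m : ℕ} {v : EuclideanSpace ℝ (Fin (m + 1)) → ℝ}
    (hv : ContDiffOn ℝ 2 v (ball 0 1))
    (hr : ∀ x ∈ ball (0 : EuclideanSpace ℝ (Fin (m + 1))) 1, ∀ y, ‖x‖ = ‖y‖ → v x = v y)
    {e : EuclideanSpace ℝ (Fin (m + 1))} (he : ‖e‖ = 1) {r : ℝ} (hr0 : 0 < r) (hr1 : r < 1) :
    HasDerivAt (fun s : ℝ => s ^ m * fderiv ℝ v (s • e) e) (r ^ m * lap v (r • e)) r := by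
  have hmem : ∀ s : ℝ, 0 ≤ s → s < 1 → s • e ∈ ball (0 : EuclideanSpace ℝ (Fin (m + 1))) 1 := by
    intro s h0 h1
    rw [mem_ball_zero_iff, norm_smul, he, mul_one, Real.norm_of_nonneg h0]; exact h1
  have hP : ∀ s : ℝ, 0 ≤ s → s < 1 →
      HasDerivAt (fun s : ℝ => v (s • e)) (fderiv ℝ v (s • e) e) s := fun s h0 h1 =>
    profile_hasDerivAt ((hv.differentiableOn (by norm_num)).differentiableAt
      (isOpen_ball.mem_nhds (hmem s h0 h1)))
  have hv1 : ContDiffOn ℝ 1 (fun y => fderiv ℝ v y e) (ball 0 1) :=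
    (hv.fderiv_of_isOpen isOpen_ball (by norm_num)).clm_apply contDiffOn_const
  have hP1 : HasDerivAt (fun s : ℝ => fderiv ℝ v (s • e) e)
      (fderiv ℝ (fun y => fderiv ℝ v y e) (r • e) e) r :=
    profile_hasDerivAt (v := fun y => fderiv ℝ v y e)
      ((hv1.differentiableOn (by norm_num)).differentiableAt
      (isOpen_ball.mem_nhds (hmem r hr0.le hr1)))
  set D := fderiv ℝ (fun y => fderiv ℝ v y e) (r • e) e with hD
  set P1 := fun s : ℝ => fderiv ℝ v (s • e) e with hP1d
  have hnr : ‖r • e‖ = r := by rw [norm_smul, he, mul_one, Real.norm_of_nonneg hr0.le]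
  have hsq : √(r ^ 2) = r := Real.sqrt_sq hr0.le
  have hlap : lap v (r • e) = D + m / r * P1 r := by
    have e1 : v =ᶠ[nhds (r • e)]
        (fun y : EuclideanSpace ℝ (Fin (m + 1)) => (fun t : ℝ => v (√t • e)) (‖y‖ ^ 2)) := by
      filter_upwards [isOpen_ball.mem_nhds (hmem r hr0.le hr1)] with y hy
      apply hr y hy
      rw [Real.sqrt_sq (norm_nonneg y), norm_smul, he, mul_one, norm_norm]
    rw [lap_congr e1]
    have a1 : ∀ᶠ t in nhds (‖r • e‖ ^ 2), HasDerivAt (fun t : ℝ => v (√t • e))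
        ((fun t => P1 (√t) * (1 / (2 * √t))) t) t := by
      have : Ioo (0:ℝ) 1 ∈ nhds (‖r • e‖ ^ 2) := by
        apply isOpen_Ioo.mem_nhds
        rw [hnr]
        constructor
        · positivity
        · nlinarith
      filter_upwards [this] with t ht
      have hs : √t < 1 := by
        rw [Real.sqrt_lt' one_pos]; simpa using ht.2
      exact (hP _ (Real.sqrt_nonneg t) hs).comp t (Real.hasDerivAt_sqrt ht.1.ne')
    have s1 : HasDerivAt (fun t : ℝ => √t) (1 / (2 * r)) (‖r • e‖ ^ 2) := by
      have := Real.hasDerivAt_sqrt (x := r ^ 2) (by positivity)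
      rw [hsq] at this
      rw [hnr]
      exact this
    have a2 : HasDerivAt (fun t => P1 (√t) * (1 / (2 * √t)))
        (D * (1 / (2 * r)) * (1 / (2 * r)) + P1 r * (-(2 * (1 / (2 * r))) / (2 * r) ^ 2))
        (‖r • e‖ ^ 2) := by
      have hq : √(‖r • e‖ ^ 2) = r := by rw [hnr, hsq]
      have b1 : HasDerivAt (fun t => P1 (√t)) (D * (1 / (2 * r))) (‖r • e‖ ^ 2) := by
        have h := hP1
        rw [← hq] at h
        have := h.comp (‖r • e‖ ^ 2) s1
        exact this
      have b2 : HasDerivAt (fun t => 1 / (2 * √t)) (-(2 * (1 / (2 * r))) / (2 * r) ^ 2)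
          (‖r • e‖ ^ 2) := by
        have := (s1.const_mul 2).inv (by rw [hq]; positivity)
        rw [hq] at this
        simp only [one_div] at this ⊢
        exact this
      have := b1.mul b2
      simp only [hq] at this
      exact this
    rw [lap_radial a1 a2, hnr, hsq]
    push_cast
    field_simp
    ring
  rw [hlap]
  have h5 := (hasDerivAt_pow m r).mul hP1
  have h6 : r ^ m * (D + m / r * P1 r) = m * r ^ (m - 1) * P1 r + r ^ m * D := by
    rcases m with _ | m
    · simp
    · rw [Nat.add_sub_cancel, pow_succ]
      field_simp
      ring
  rw [h6]
  exact h5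

theorem fderiv_zero_of_even {E : Type*} [NormedAddCommGroup E] [NormedSpace ℝ E] {v : E → ℝ}
    (h : (fun x => v (-x)) =ᶠ[nhds 0] v) (e : E) : fderiv ℝ v 0 e = 0 := by
  have h1 := h.fderiv_eq (𝕜 := ℝ)
  by_cases hv : DifferentiableAt ℝ v 0
  · have hd : HasFDerivAt v (fderiv ℝ v 0) (-(0 : E)) := by
      rw [neg_zero]; exact hv.hasFDerivAt
    have h2 := (hd.comp (0 : E) (hasFDerivAt_id (0 : E)).neg).fderiv
    have h3 : fderiv ℝ (fun x => v (-x)) 0 = _ := h2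
    rw [h1] at h3
    have h4 : fderiv ℝ v 0 e = fderiv ℝ v 0 (-e) := congrArg (fun L => L e) h3
    rw [map_neg] at h4
    linarith
  · rw [fderiv_zero_of_not_differentiableAt hv]; rfl

theorem rad_of_solution {m : ℕ} {lam : ℝ} {u : EuclideanSpace ℝ (Fin (m + 1)) → ℝ}
    (hu : IsClassicalSolution (m + 1) lam u)
    (hr : ∀ x ∈ ball (0 : EuclideanSpace ℝ (Fin (m + 1))) 1, ∀ y, ‖x‖ = ‖y‖ → u x = u y)
    {e : EuclideanSpace ℝ (Fin (m + 1))} (he : ‖e‖ = 1) :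
    Rad m (fun r => lam / (1 - u (r • e)) ^ 2) (fun r => u (r • e))
      (fun r => fderivWithin ℝ u (closedBall 0 1) (r • e) e)
      (fun r => lap u (r • e)) (fun r => fderiv ℝ (lap u) (r • e) e) := by
  have hmem : ∀ s : ℝ, 0 ≤ s → s < 1 → s • e ∈ ball (0 : EuclideanSpace ℝ (Fin (m + 1))) 1 := by
    intro s h0 h1
    rw [mem_ball_zero_iff, norm_smul, he, mul_one, Real.norm_of_nonneg h0]; exact h1
  have hmemc : MapsTo (fun s : ℝ => s • e) (Icc 0 1)
      (closedBall (0 : EuclideanSpace ℝ (Fin (m + 1))) 1) := by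
    intro s hs
    show s • e ∈ _
    rw [mem_closedBall_zero_iff, norm_smul, he, mul_one, Real.norm_of_nonneg hs.1]; exact hs.2
  have hmemo : MapsTo (fun s : ℝ => s • e) (Ico 0 1)
      (ball (0 : EuclideanSpace ℝ (Fin (m + 1))) 1) := fun s hs => hmem s hs.1 hs.2
  have hcs : Continuous (fun s : ℝ => s • e) := by fun_prop
  have hub : ContDiffOn ℝ 4 u (ball 0 1) := hu.contDiffOn.mono ball_subset_closedBall
  have hl : ContDiffOn ℝ 2 (lap u) (ball 0 1) := by
    have : ContDiffOn ℝ (2 : ℕ) (lap u) (ball 0 1) :=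
      contDiffOn_lap isOpen_ball (hub.of_le (by norm_num))
    exact_mod_cast this
  have hU : UniqueDiffOn ℝ (closedBall (0 : EuclideanSpace ℝ (Fin (m + 1))) 1) :=
    uniqueDiffOn_convex (convex_closedBall _ _)
      (by rw [interior_closedBall _ one_ne_zero]; exact ⟨0, mem_ball_self one_pos⟩)
  have hfw : ∀ x ∈ ball (0 : EuclideanSpace ℝ (Fin (m + 1))) 1,
      fderivWithin ℝ u (closedBall 0 1) x = fderiv ℝ u x := fun x hx =>
    fderivWithin_of_mem_nhds (mem_of_superset (isOpen_ball.mem_nhds hx) ball_subset_closedBall)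
  have hlr : ∀ x ∈ ball (0 : EuclideanSpace ℝ (Fin (m + 1))) 1, ∀ y, ‖x‖ = ‖y‖ →
      lap u x = lap u y := by
    intro x hx y hxy
    have hy : y ∈ ball (0 : EuclideanSpace ℝ (Fin (m + 1))) 1 := by
      rw [mem_ball_zero_iff] at hx ⊢; rwa [← hxy]
    set R := ((Submodule.span ℝ {x - y})ᗮ.reflection) with hR
    have hRx : R x = y := Submodule.reflection_sub hxy
    have h1 : lap (fun z => u (R z)) x = lap u (R x) := lap_comp_isometry R (by
      rw [hRx]
      exact (hub.contDiffAt (isOpen_ball.mem_nhds hy)).of_le (by norm_num))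
    rw [hRx] at h1
    rw [← h1]
    apply lap_congr
    filter_upwards [isOpen_ball.mem_nhds hx] with z hz
    exact hr z hz _ (R.norm_map z).symm
  have hpc : ContinuousOn (fun r : ℝ => u (r • e)) (Icc 0 1) :=
    hu.contDiffOn.continuousOn.comp hcs.continuousOn hmemc
  have hp1 : u ((1:ℝ) • e) = 0 := hu.bdry _ (by rw [one_smul, he])
  have hlt : ∀ r ∈ Icc (0:ℝ) 1, u (r • e) < 1 := by
    intro r hrr
    rcases hrr.2.lt_or_eq with h | h
    · exact hu.lt_one _ (hmem r hrr.1 h)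
    · rw [h, hp1]; exact one_pos
  have heven : ∀ v : EuclideanSpace ℝ (Fin (m + 1)) → ℝ,
      (∀ x ∈ ball (0 : EuclideanSpace ℝ (Fin (m + 1))) 1, ∀ y, ‖x‖ = ‖y‖ → v x = v y) →
      fderiv ℝ v 0 e = 0 := by
    intro v hv
    apply fderiv_zero_of_even
    filter_upwards [ball_mem_nhds (0 : EuclideanSpace ℝ (Fin (m + 1))) one_pos] with z hz
    exact (hv z hz _ (norm_neg z).symm).symm
  refine ⟨?_, hpc, hp1, ?_, ?_, ?_, ?_, ?_, ?_, ?_, ?_, ?_, ?_⟩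
  · refine continuousOn_const.div ((continuousOn_const.sub hpc).pow 2) ?_
    intro r hrr
    have := hlt r hrr
    have : 0 < 1 - u (r • e) := by linarith
    positivity
  · have h1 : ContinuousOn (fderivWithin ℝ u (closedBall 0 1)) (closedBall 0 1) :=
      hu.contDiffOn.continuousOn_fderivWithin hU (by norm_num)
    exact (h1.comp hcs.continuousOn hmemc).clm_apply continuousOn_const
  · show fderivWithin ℝ u (closedBall 0 1) ((0:ℝ) • e) e = 0
    rw [zero_smul, hfw 0 (mem_ball_self one_pos)]
    exact heven u hr
  · show fderivWithin ℝ u (closedBall 0 1) ((1:ℝ) • e) e = 0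
    rw [one_smul]
    exact hu.bdry_deriv e he
  · exact hl.continuousOn.comp hcs.continuousOn hmemo
  · have h1 : ContinuousOn (fderiv ℝ (lap u)) (ball 0 1) :=
      hl.continuousOn_fderiv_of_isOpen isOpen_ball (by norm_num)
    exact (h1.comp hcs.continuousOn hmemo).clm_apply continuousOn_const
  · show fderiv ℝ (lap u) ((0:ℝ) • e) e = 0
    rw [zero_smul]
    exact heven _ hlr
  · intro r hrr
    have hx := hmem r hrr.1.le hrr.2
    show HasDerivAt _ (fderivWithin ℝ u (closedBall 0 1) (r • e) e) r
    rw [hfw _ hx]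
    exact profile_hasDerivAt ((hub.differentiableOn (by norm_num)).differentiableAt
      (isOpen_ball.mem_nhds hx))
  · intro r hrr
    refine (profile_lap (hub.of_le (by norm_num)) hr he hrr.1 hrr.2).congr_of_eventuallyEq ?_
    filter_upwards [isOpen_Ioo.mem_nhds hrr] with s hs
    rw [hfw _ (hmem s hs.1.le hs.2)]
  · intro r hrr
    exact profile_hasDerivAt ((hl.differentiableOn (by norm_num)).differentiableAt
      (isOpen_ball.mem_nhds (hmem r hrr.1.le hrr.2)))
  · intro r hrr
    have := profile_lap hl hlr he hrr.1 hrr.2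
    have h2 := hu.eqn _ (hmem r hrr.1.le hrr.2)
    unfold biharm at h2
    rwa [h2] at this

/-- for 1 ≤ N ≤ 4 the extremal solution u* is regular: sup_B u* < 1. -/
theorem extremal_regular_dim_le_four (N : ℕ) (hN₁ : 1 ≤ N) (hN₂ : N ≤ 4)
    (uMin : ℝ → EuclideanSpace ℝ (Fin N) → ℝ)
    (hMin : ∀ lam : ℝ, 0 < lam → lam < sSup (solSet N) →
      IsClassicalSolution N lam (uMin lam) ∧
        ∀ v, IsClassicalSolution N lam v →
          ∀ x ∈ ball (0 : EuclideanSpace ℝ (Fin N)) 1, uMin lam x ≤ v x)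
    (hMono : ∀ x ∈ ball (0 : EuclideanSpace ℝ (Fin N)) 1, ∀ l₁ l₂ : ℝ,
      0 < l₁ → l₁ ≤ l₂ → l₂ < sSup (solSet N) → uMin l₁ x ≤ uMin l₂ x)
    (uStar : EuclideanSpace ℝ (Fin N) → ℝ)
    (hStar : ∀ x ∈ ball (0 : EuclideanSpace ℝ (Fin N)) 1,
      Tendsto (fun lam => uMin lam x) (nhdsWithin (sSup (solSet N)) (Iio (sSup (solSet N))))
        (nhds (uStar x)))
    :
    sSup (uStar '' ball (0 : EuclideanSpace ℝ (Fin N)) 1) < 1 := by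
  obtain ⟨l₀, hl₀⟩ := solSet_nonempty N hN₁
  have hL : 0 < sSup (solSet N) := hl₀.1.trans_le (le_csSup (bddAbove_solSet N) hl₀)
  set L := sSup (solSet N) with hLd
  obtain ⟨m, rfl⟩ : ∃ m, N = m + 1 := ⟨N - 1, by omega⟩
  set e : EuclideanSpace ℝ (Fin (m + 1)) := EuclideanSpace.single 0 1 with hed
  have he : ‖e‖ = 1 := by simp [hed]
  have hrad : ∀ l, 0 < l → l < L → ∀ x ∈ ball (0 : EuclideanSpace ℝ (Fin (m + 1))) 1,
      ∀ y, ‖x‖ = ‖y‖ → uMin l x = uMin l y := by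
    intro l h0 h1 x hx y hxy
    obtain ⟨hs, hm⟩ := hMin l h0 h1
    exact radial_of_comp (fun R z hz => hm _ (isClassicalSolution_comp hs R) z hz) hx hxy
  have hmem : ∀ s : ℝ, 0 ≤ s → s < 1 → s • e ∈ ball (0 : EuclideanSpace ℝ (Fin (m + 1))) 1 := by
    intro s h0 h1
    rw [mem_ball_zero_iff, norm_smul, he, mul_one, Real.norm_of_nonneg h0]; exact h1
  have hR : ∀ l, 0 < l → l < L → _ := fun l h0 h1 =>
    rad_of_solution (hMin l h0 h1).1 (hrad l h0 h1) he
  have hnn : ∀ l, 0 < l → l < L → ∀ r ∈ Icc (0:ℝ) 1, 0 ≤ uMin l (r • e) ∧ uMin l (r • e) < 1 := by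
    intro l h0 h1 r hr
    have hs := (hMin l h0 h1).1
    rcases hr.2.lt_or_eq with h | h
    · exact ⟨(hs.pos _ (hmem r hr.1 h)).le, hs.lt_one _ (hmem r hr.1 h)⟩
    · have : uMin l (r • e) = 0 := hs.bdry _ (by rw [h, one_smul, he])
      rw [this]; exact ⟨le_rfl, one_pos⟩
  set δ := (17 * L) ^ 3 * Real.exp (-(64 * (17 * L) ^ 3)) with hδ
  have hδ0 : 0 < δ := by positivity
  have main : ∀ l, 0 < l → l < L → ∀ x ∈ ball (0 : EuclideanSpace ℝ (Fin (m + 1))) 1,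
      uMin l x ≤ 1 - δ := by
    intro l h0 h1 x hx
    obtain ⟨l₂, hl1, hl2⟩ := exists_between h1
    have R₁ := hR l h0 h1
    have R₂ := hR l₂ (h0.trans hl1) hl2
    have hJ := Rad.energy R₁ R₂ h0 hl1 (fun r hr => (hnn l h0 h1 r hr).1)
      (fun r hr => by
        rcases hr.2.lt_or_eq with h | h
        · exact hMono _ (hmem r hr.1 h) _ _ h0 hl1.le hl2
        · rw [h]
          have a := R₁.p1
          have b := R₂.p1
          exact (a.trans b.symm).le)
      (fun r hr => (hnn l₂ (h0.trans hl1) hl2 r hr).2)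
    have hq := Rad.quant (L := L) (by omega) R₁ h0 h1.le (fun r hr => (hnn l h0 h1 r hr).1)
      (fun r hr => (hnn l h0 h1 r hr).2) hJ
    have hanti := (R₁.strictAnti (fun r hr => by
      have := (hnn l h0 h1 r (Ioo_subset_Icc_self hr)).2
      have : 0 < 1 - uMin l (r • e) := by linarith
      positivity)).antitoneOn
    rw [mem_ball_zero_iff] at hx
    have h3 := hanti (left_mem_Icc.2 zero_le_one) ⟨norm_nonneg x, hx.le⟩ (norm_nonneg x)
    have h4 : uMin l x = uMin l (‖x‖ • e) :=
      hrad l h0 h1 x (by rwa [mem_ball_zero_iff]) _ (by rw [norm_smul, he, mul_one, norm_norm])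
    rw [h4]
    exact h3.trans hq
  have hstar : ∀ x ∈ ball (0 : EuclideanSpace ℝ (Fin (m + 1))) 1, uStar x ≤ 1 - δ := by
    intro x hx
    refine le_of_tendsto (hStar x hx) ?_
    filter_upwards [Ioo_mem_nhdsLT hL] with l hl
    exact main l hl.1 hl.2 x hx
  refine lt_of_le_of_lt (csSup_le ⟨_, mem_image_of_mem _ (mem_ball_self one_pos)⟩ ?_)
    (show 1 - δ < 1 by linarith)
  rintro _ ⟨x, hx, rfl⟩
  exact hstar x hx
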